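/- arXiv:1004.3713 — 2 statements merged into one kernel-verified Lean document; each statement's English description precedes it below -/
import Mathlib

section
/- Assume (A1'), (A2) and (A3). Let λ₀ ∈ D be a point at which Λ is differentiable and set x₀ = ∇Λ(λ₀). If liminf_{n→∞} (log k(n))/n > Λ*(x₀), then with probability 1, lim_{ε→0} lim_{n→∞} (1/n) log μ_n^ω(B(x₀,ε)) = −Λ*(x₀), where B(x₀,ε) is the closed ball of center x₀ and radius ε. (Theorem 5(2), first part.) -/
open MeasureTheory ProbabilityTheory Filter Set Real
open scoped ENNReal NNReal Classical Topology RealInnerProductSpace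

lemma inv_mul_log_le_iff {n : ℕ} (hn : 0 < n) (M : ℝ≥0∞) (a : ℝ) :
    ((n : ℝ)⁻¹ : EReal) * ENNReal.log M ≤ (a : EReal) ↔ M ≤ ENNReal.ofReal (exp (n * a)) := by
  have h0 : (0 : EReal) < ((n : ℝ) : EReal) := by exact_mod_cast hn
  rw [← EReal.div_eq_inv_mul, EReal.div_le_iff_le_mul h0 (EReal.coe_ne_top _),
    ← ENNReal.log_le_log_iff, ENNReal.log_ofReal, if_neg (not_le.2 (exp_pos _)), log_exp,
    EReal.coe_mul]

lemma le_inv_mul_log_iff {n : ℕ} (hn : 0 < n) (M : ℝ≥0∞) (a : ℝ) :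
    (a : EReal) ≤ ((n : ℝ)⁻¹ : EReal) * ENNReal.log M ↔ ENNReal.ofReal (exp (n * a)) ≤ M := by
  have h0 : (0 : EReal) < ((n : ℝ) : EReal) := by exact_mod_cast hn
  rw [← EReal.div_eq_inv_mul, EReal.le_div_iff_mul_le h0 (EReal.coe_ne_top _),
    ← ENNReal.log_le_log_iff, ENNReal.log_ofReal, if_neg (not_le.2 (exp_pos _)), log_exp,
    mul_comm (a : EReal), EReal.coe_mul]

lemma setLIntegral_exp_le {Ω : Type*} [MeasurableSpace Ω] {P : Measure Ω} {s : Set Ω}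
    (hs : MeasurableSet s) {f g : Ω → ℝ} {a : ℝ} (h : ∀ ω ∈ s, g ω + a ≤ f ω) :
    ∫⁻ ω in s, ENNReal.ofReal (exp (g ω)) ∂P ≤
      ENNReal.ofReal (exp (-a)) * ∫⁻ ω, ENNReal.ofReal (exp (f ω)) ∂P := by
  rw [← lintegral_const_mul' _ _ ENNReal.ofReal_ne_top]
  refine le_trans (setLIntegral_mono' hs fun ω hω => ?_) (setLIntegral_le_lintegral s _)
  rw [← ENNReal.ofReal_mul (exp_pos _).le, ← exp_add]
  exact ENNReal.ofReal_le_ofReal (exp_le_exp.2 (by linarith [h ω hω]))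

lemma measurableSet_smul_mem_closedBall {Ω : Type*} [MeasurableSpace Ω] {d : ℕ}
    {Y : Ω → EuclideanSpace ℝ (Fin d)} (hY : Measurable Y) (c : ℝ)
    (x : EuclideanSpace ℝ (Fin d)) (ε : ℝ) :
    MeasurableSet {ω | c • Y ω ∈ Metric.closedBall x ε} := by
  have h : Measurable fun ω => c • Y ω := (continuous_const_smul c).measurable.comp hY
  exact h Metric.isClosed_closedBall.measurableSet

/-- Chernoff bound for a ball. -/
lemma measure_closedBall_le_exp {Ω : Type*} [MeasurableSpace Ω] {P : Measure Ω} {d : ℕ}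
    {Y : Ω → EuclideanSpace ℝ (Fin d)} (hY : Measurable Y) {n : ℕ} (hn : 0 < n)
    (lam x : EuclideanSpace ℝ (Fin d)) (ε : ℝ) :
    P {ω | (n : ℝ)⁻¹ • Y ω ∈ Metric.closedBall x ε} ≤
      ENNReal.ofReal (exp (-(n * (⟪lam, x⟫ - ‖lam‖ * ε)))) *
        ∫⁻ ω, ENNReal.ofReal (exp ⟪lam, Y ω⟫) ∂P := by
  have hn' : (0 : ℝ) < n := by exact_mod_cast hn
  have hs : MeasurableSet {ω | (n : ℝ)⁻¹ • Y ω ∈ Metric.closedBall x ε} :=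
    measurableSet_smul_mem_closedBall hY _ _ _
  have := setLIntegral_exp_le (P := P) hs (g := fun _ => 0) (f := fun ω => ⟪lam, Y ω⟫)
    (a := n * (⟪lam, x⟫ - ‖lam‖ * ε)) (fun ω hω => ?_)
  · simpa using this
  · have h1 : ‖(n : ℝ)⁻¹ • Y ω - x‖ ≤ ε := by simpa [dist_eq_norm] using hω
    have h2 := (abs_le.1 (abs_real_inner_le_norm lam ((n : ℝ)⁻¹ • Y ω - x))).1
    have h3 : ‖lam‖ * ‖(n : ℝ)⁻¹ • Y ω - x‖ ≤ ‖lam‖ * ε := by gcongr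
    rw [inner_sub_right, inner_smul_right] at h2
    have h4 : ⟪lam, x⟫ - ‖lam‖ * ε ≤ (n : ℝ)⁻¹ * ⟪lam, Y ω⟫ := by linarith
    have h5 := mul_le_mul_of_nonneg_left h4 hn'.le
    rw [mul_inv_cancel_left₀ hn'.ne'] at h5
    linarith

/-- The complement of a ball is covered by finitely many half-spaces. -/
lemma exists_finset_one_lt_inner (d : ℕ) {ε : ℝ} (hε : 0 < ε) :
    ∃ V : Finset (EuclideanSpace ℝ (Fin d)), ∀ y, ε < ‖y‖ → ∃ v ∈ V, 1 < ⟪v, y⟫ := by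
  set c : ℝ := (d + 1) / ε
  have hc : 0 < c := by positivity
  refine ⟨Finset.univ.image (fun i : Fin d => EuclideanSpace.single i c) ∪
    Finset.univ.image (fun i : Fin d => EuclideanSpace.single i (-c)), fun y hy => ?_⟩
  by_contra! hcon
  have h1 : ∀ i, |y i| ≤ c⁻¹ := by
    intro i
    have ha := hcon (EuclideanSpace.single i c) (by simp)
    have hb := hcon (EuclideanSpace.single i (-c)) (by simp)
    simp only [EuclideanSpace.inner_single_left, conj_trivial] at ha hb
    rw [abs_le, inv_eq_one_div, le_div_iff₀ hc, ← neg_div, div_le_iff₀ hc]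
    constructor <;> linarith
  have h2 : ‖y‖ ≤ ∑ i, |y i| := by
    conv_lhs => rw [← (EuclideanSpace.basisFun (Fin d) ℝ).sum_repr y]
    refine (norm_sum_le _ _).trans (Finset.sum_le_sum fun i _ => ?_)
    rw [norm_smul]; simp
  have h3 : ∑ i, |y i| ≤ d * c⁻¹ := by
    refine (Finset.sum_le_sum fun i _ => h1 i).trans ?_
    simp
  have h4 : d * c⁻¹ ≤ ε := by
    simp only [c, inv_div]
    rw [mul_div_assoc', div_le_iff₀ (by positivity)]
    nlinarith
  linarith

/-- A finite family of eventual positive rates has a common positive lower bound. -/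
lemma Finset.exists_pos_le_of_forall_pos {ι : Type*} (V : Finset ι) (c : ι → ℝ)
    (hc : ∀ v ∈ V, 0 < c v) : ∃ c₀ > 0, ∀ v ∈ V, c₀ ≤ c v := by
  rcases V.eq_empty_or_nonempty with rfl | hV
  · exact ⟨1, one_pos, by simp⟩
  · obtain ⟨v, hv, h⟩ := V.exists_min_image c hV
    exact ⟨c v, hc v hv, h⟩

lemma tilted_halfspace_decay {Ω : Type*} [MeasurableSpace Ω] {P : Measure Ω} {d : ℕ}
    {Y : ℕ → Ω → EuclideanSpace ℝ (Fin d)} (hY : ∀ n, Measurable (Y n))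
    {D : Set (EuclideanSpace ℝ (Fin d))} (hD : IsOpen D) {Λ : EuclideanSpace ℝ (Fin d) → ℝ}
    (hup : ∀ lam ∈ D, ∀ η > 0, ∀ᶠ n : ℕ in atTop,
      ∫⁻ ω, ENNReal.ofReal (exp ⟪lam, Y n ω⟫) ∂P ≤ ENNReal.ofReal (exp (n * (Λ lam + η))))
    {lam₀ x₀ : EuclideanSpace ℝ (Fin d)} (hlam₀ : lam₀ ∈ D) (hx₀ : HasGradientAt Λ x₀ lam₀)
    (v : EuclideanSpace ℝ (Fin d)) :
    ∃ c > 0, ∀ᶠ n : ℕ in atTop,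
      ∫⁻ ω in {ω | 1 < ⟪v, (n : ℝ)⁻¹ • Y n ω - x₀⟫}, ENNReal.ofReal (exp ⟪lam₀, Y n ω⟫) ∂P ≤
        ENNReal.ofReal (exp (n * (Λ lam₀ - c))) := by
  have hline : HasDerivAt (fun t : ℝ => Λ (lam₀ + t • v)) ⟪x₀, v⟫ 0 := by
    have := hx₀.hasFDerivAt.hasLineDerivAt v
    simpa [HasLineDerivAt] using this
  have hDt : ∀ᶠ t : ℝ in 𝓝 0, lam₀ + t • v ∈ D := by
    have : ContinuousAt (fun t : ℝ => lam₀ + t • v) 0 := by fun_prop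
    exact this.eventually (by simpa using hD.mem_nhds hlam₀)
  have hsl := hline.tendsto_slope_zero_right
  have h1 : ∀ᶠ t : ℝ in 𝓝[>] 0,
      t⁻¹ • (Λ (lam₀ + (0 + t) • v) - Λ (lam₀ + (0 : ℝ) • v)) < ⟪x₀, v⟫ + 1 :=
    hsl.eventually (gt_mem_nhds (by linarith))
  obtain ⟨t, h1t, hDt, ht⟩ :=
    (h1.and ((hDt.filter_mono nhdsWithin_le_nhds).and self_mem_nhdsWithin)).exists
  have ht : 0 < t := ht
  have h2 : Λ (lam₀ + t • v) - Λ lam₀ < t * (⟪x₀, v⟫ + 1) := by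
    rw [smul_eq_mul, inv_mul_lt_iff₀ ht] at h1t
    simpa using h1t
  set c : ℝ := (t * (⟪x₀, v⟫ + 1) - (Λ (lam₀ + t • v) - Λ lam₀)) / 2
  have hc : 0 < c := by simp only [c]; linarith
  refine ⟨c, hc, ?_⟩
  filter_upwards [hup _ hDt c hc, eventually_gt_atTop 0] with n hn hn0
  have hn' : (0 : ℝ) < n := by exact_mod_cast hn0
  have hs : MeasurableSet {ω | 1 < ⟪v, (n : ℝ)⁻¹ • Y n ω - x₀⟫} :=
    measurableSet_lt measurable_const ((show Continuous fun y : EuclideanSpace ℝ (Fin d) =>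
      ⟪v, (n : ℝ)⁻¹ • y - x₀⟫ by fun_prop).measurable.comp (hY n))
  refine (setLIntegral_exp_le hs (f := fun ω => ⟪lam₀ + t • v, Y n ω⟫)
    (a := n * (t * (⟪x₀, v⟫ + 1))) fun ω hω => ?_).trans ?_
  · have h3 : 1 < ⟪v, (n : ℝ)⁻¹ • Y n ω - x₀⟫ := hω
    rw [inner_sub_right, inner_smul_right, real_inner_comm] at h3
    have h4 : n * (⟪x₀, v⟫ + 1) ≤ ⟪v, Y n ω⟫ := by
      have := mul_le_mul_of_nonneg_left (show ⟪x₀, v⟫ + 1 ≤ (n : ℝ)⁻¹ * ⟪v, Y n ω⟫ by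
        rw [real_inner_comm] at h3 ⊢
        linarith [real_inner_comm v x₀, real_inner_comm v (Y n ω)]) hn'.le
      rwa [mul_inv_cancel_left₀ hn'.ne'] at this
    rw [inner_add_left, inner_smul_left]
    have h5 := mul_le_mul_of_nonneg_left h4 ht.le
    simp only [conj_trivial]
    linarith
  · refine (mul_le_mul_right hn _).trans ?_
    rw [← ENNReal.ofReal_mul (exp_pos _).le, ← exp_add]
    refine ENNReal.ofReal_le_ofReal (exp_le_exp.2 ?_)
    have : -(n * (t * (⟪x₀, v⟫ + 1))) + n * (Λ (lam₀ + t • v) + c) = n * (Λ lam₀ - c) := by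
      simp only [c]; ring
    exact this.le

lemma eventually_const_mul_exp_le {a b : ℝ} (hab : a < b) (C : ℝ) :
    ∀ᶠ n : ℕ in atTop, C * exp (n * a) ≤ exp (n * b) := by
  have h : Tendsto (fun n : ℕ => exp (n * (b - a))) atTop atTop :=
    tendsto_exp_atTop.comp (tendsto_natCast_atTop_atTop.atTop_mul_const (sub_pos.2 hab))
  filter_upwards [h.eventually_ge_atTop C] with n hn
  calc C * exp (n * a) ≤ exp (n * (b - a)) * exp (n * a) := by gcongr
    _ = exp (n * b) := by rw [← exp_add]; ring_nf

lemma lintegral_biUnion_finset_le {α ι : Type*} [MeasurableSpace α] {μ : Measure α}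
    (V : Finset ι) (s : ι → Set α) (f : α → ℝ≥0∞) :
    ∫⁻ a in ⋃ v ∈ V, s v, f a ∂μ ≤ ∑ v ∈ V, ∫⁻ a in s v, f a ∂μ := by
  induction V using Finset.induction_on with
  | empty => simp
  | insert v V hv ih =>
    rw [Finset.sum_insert hv, Finset.set_biUnion_insert]
    exact (lintegral_union_le _ _ _).trans (by gcongr)

/-- The local large deviation lower bound at an exposed point. -/
lemma eventually_exp_le_measureReal_closedBall {Ω : Type*} [MeasurableSpace Ω] {P : Measure Ω}
    [IsProbabilityMeasure P] {d : ℕ}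
    {Y : ℕ → Ω → EuclideanSpace ℝ (Fin d)} (hY : ∀ n, Measurable (Y n))
    {D : Set (EuclideanSpace ℝ (Fin d))} (hD : IsOpen D) {Λ : EuclideanSpace ℝ (Fin d) → ℝ}
    (hup : ∀ lam ∈ D, ∀ η > 0, ∀ᶠ n : ℕ in atTop,
      ∫⁻ ω, ENNReal.ofReal (exp ⟪lam, Y n ω⟫) ∂P ≤ ENNReal.ofReal (exp (n * (Λ lam + η))))
    (hlow : ∀ lam ∈ D, ∀ η > 0, ∀ᶠ n : ℕ in atTop,
      ENNReal.ofReal (exp (n * (Λ lam - η))) ≤ ∫⁻ ω, ENNReal.ofReal (exp ⟪lam, Y n ω⟫) ∂P)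
    {lam₀ x₀ : EuclideanSpace ℝ (Fin d)} (hlam₀ : lam₀ ∈ D) (hx₀ : HasGradientAt Λ x₀ lam₀)
    {ε η : ℝ} (hε : 0 < ε) (hη : 0 < η) :
    ∀ᶠ n : ℕ in atTop, exp (n * (-(⟪lam₀, x₀⟫ - Λ lam₀) - η)) ≤
      P.real {ω | (n : ℝ)⁻¹ • Y n ω ∈ Metric.closedBall x₀ ε} := by
  set ε' : ℝ := min ε (η / (4 * (‖lam₀‖ + 1)))
  have hε' : 0 < ε' := by positivity
  have hε'η : ‖lam₀‖ * ε' ≤ η / 4 := by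
    have h1 : ε' ≤ η / (4 * (‖lam₀‖ + 1)) := min_le_right _ _
    rw [le_div_iff₀ (by positivity)] at h1
    nlinarith
  obtain ⟨V, hV⟩ := exists_finset_one_lt_inner d hε'
  choose c hc hcV using tilted_halfspace_decay hY hD hup hlam₀ hx₀
  obtain ⟨c₀, hc₀, hc₀V⟩ := V.exists_pos_le_of_forall_pos c (fun v _ => hc v)
  have hall : ∀ᶠ n : ℕ in atTop, ∀ v ∈ V,
      ∫⁻ ω in {ω | 1 < ⟪v, (n : ℝ)⁻¹ • Y n ω - x₀⟫}, ENNReal.ofReal (exp ⟪lam₀, Y n ω⟫) ∂P ≤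
        ENNReal.ofReal (exp (n * (Λ lam₀ - c v))) :=
    (eventually_all_finset V).2 fun v _ => hcV v
  set η' : ℝ := min (η / 4) (c₀ / 2)
  have hη' : 0 < η' := by positivity
  have hη'1 : η' ≤ η / 4 := min_le_left _ _
  have hη'2 : η' < c₀ := lt_of_le_of_lt (min_le_right _ _) (by linarith)
  filter_upwards [hall, hlow lam₀ hlam₀ η' hη',
    eventually_const_mul_exp_le (show Λ lam₀ - c₀ < Λ lam₀ - η' by linarith) (2 * V.card),
    eventually_const_mul_exp_le (show Λ lam₀ - η / 2 < Λ lam₀ - η' by linarith) 2,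
    eventually_gt_atTop 0] with n hn1 hn2 hn3 hn4 hn0
  have hn' : (0 : ℝ) < n := by exact_mod_cast hn0
  set s : Set Ω := {ω | (n : ℝ)⁻¹ • Y n ω ∈ Metric.closedBall x₀ ε'}
  have hs : MeasurableSet s :=
    measurableSet_smul_mem_closedBall (hY n) _ _ _
  have hcover : (Set.univ : Set Ω) ⊆ s ∪ ⋃ v ∈ V, {ω | 1 < ⟪v, (n : ℝ)⁻¹ • Y n ω - x₀⟫} := by
    intro ω _
    by_cases h : ω ∈ s
    · exact Or.inl h
    · right
      have : ε' < ‖(n : ℝ)⁻¹ • Y n ω - x₀‖ := by simpa [s, dist_eq_norm] using h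
      obtain ⟨v, hv, h1⟩ := hV _ this
      exact mem_biUnion hv h1
  have hin : ∫⁻ ω in s, ENNReal.ofReal (exp ⟪lam₀, Y n ω⟫) ∂P ≤
      ENNReal.ofReal (exp (n * (⟪lam₀, x₀⟫ + ‖lam₀‖ * ε'))) * P s := by
    rw [← setLIntegral_const]
    refine setLIntegral_mono' hs fun ω hω => ENNReal.ofReal_le_ofReal (exp_le_exp.2 ?_)
    have h1 : ‖(n : ℝ)⁻¹ • Y n ω - x₀‖ ≤ ε' := by simpa [s, dist_eq_norm] using hω
    have h2 := (abs_le.1 (abs_real_inner_le_norm lam₀ ((n : ℝ)⁻¹ • Y n ω - x₀))).2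
    have h3 : ‖lam₀‖ * ‖(n : ℝ)⁻¹ • Y n ω - x₀‖ ≤ ‖lam₀‖ * ε' := by gcongr
    rw [inner_sub_right, inner_smul_right] at h2
    have h4 : (n : ℝ)⁻¹ * ⟪lam₀, Y n ω⟫ ≤ ⟪lam₀, x₀⟫ + ‖lam₀‖ * ε' := by linarith
    rwa [inv_mul_le_iff₀ hn'] at h4
  have htot : ENNReal.ofReal (exp (n * (Λ lam₀ - η'))) ≤
      ENNReal.ofReal (exp (n * (⟪lam₀, x₀⟫ + ‖lam₀‖ * ε'))) * P s +
        V.card * ENNReal.ofReal (exp (n * (Λ lam₀ - c₀))) := by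
    refine hn2.trans ?_
    rw [← setLIntegral_univ]
    refine (lintegral_mono_set hcover).trans ((lintegral_union_le _ _ _).trans
      (add_le_add hin ?_))
    refine (lintegral_biUnion_finset_le V _ _).trans ?_
    rw [← nsmul_eq_mul]
    refine Finset.sum_le_card_nsmul _ _ _ fun v hv => (hn1 v hv).trans ?_
    gcongr
    exact hc₀V v hv
  have hreal : exp (n * (Λ lam₀ - η')) ≤
      exp (n * (⟪lam₀, x₀⟫ + ‖lam₀‖ * ε')) * P.real s + V.card * exp (n * (Λ lam₀ - c₀)) := by
    rw [← ENNReal.ofReal_le_ofReal_iff (by positivity),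
      ENNReal.ofReal_add (by positivity) (by positivity), ENNReal.ofReal_mul (by positivity),
      ENNReal.ofReal_mul (by positivity), ofReal_measureReal, ENNReal.ofReal_natCast]
    exact htot
  have hkey : exp (n * (Λ lam₀ - η / 2)) ≤
      exp (n * (⟪lam₀, x₀⟫ + ‖lam₀‖ * ε')) * P.real s := by linarith
  calc exp (n * (-(⟪lam₀, x₀⟫ - Λ lam₀) - η))
      ≤ exp (-(n * (⟪lam₀, x₀⟫ + ‖lam₀‖ * ε'))) * exp (n * (Λ lam₀ - η / 2)) := by
        rw [← exp_add, exp_le_exp]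
        have := mul_le_mul_of_nonneg_left hε'η hn'.le
        nlinarith
    _ ≤ exp (-(n * (⟪lam₀, x₀⟫ + ‖lam₀‖ * ε'))) *
          (exp (n * (⟪lam₀, x₀⟫ + ‖lam₀‖ * ε')) * P.real s) := by gcongr
    _ = P.real s := by rw [← mul_assoc, ← exp_add]; simp
    _ ≤ P.real {ω | (n : ℝ)⁻¹ • Y n ω ∈ Metric.closedBall x₀ ε} := by
        have hsub : s ⊆ {ω | (n : ℝ)⁻¹ • Y n ω ∈ Metric.closedBall x₀ ε} := fun ω hω =>
          Metric.closedBall_subset_closedBall (min_le_left ε _) hω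
        exact measureReal_mono hsub

section Mixing

variable {Ω : Type*} [MeasurableSpace Ω]

lemma abs_mul_sub_inter_le_one (P : Measure Ω) [IsProbabilityMeasure P] (A B : Set Ω) :
    |(P A).toReal * (P B).toReal - (P (A ∩ B)).toReal| ≤ 1 := by
  have h : ∀ s : Set Ω, 0 ≤ (P s).toReal ∧ (P s).toReal ≤ 1 := fun s =>
    ⟨ENNReal.toReal_nonneg, measureReal_le_one⟩
  have h1 : 0 ≤ (P A).toReal * (P B).toReal := mul_nonneg (h A).1 (h B).1
  have h2 : (P A).toReal * (P B).toReal ≤ 1 := mul_le_one₀ (h A).2 (h B).1 (h B).2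
  rw [abs_le]
  constructor <;> linarith [(h (A ∩ B)).1, (h (A ∩ B)).2]

/-- The Rosenblatt coefficient between `F i` and `G (i + m)`, uniformly in `i`. -/
noncomputable def rosenblattCoeff (P : Measure Ω) (F G : ℕ → MeasurableSpace Ω) (m : ℕ) : ℝ :=
  ⨆ i : ℕ, sSup {r : ℝ | ∃ A B : Set Ω, MeasurableSet[F i] A ∧ MeasurableSet[G (i + m)] B ∧
    r = |(P A).toReal * (P B).toReal - (P (A ∩ B)).toReal|}

lemma rosenblattCoeff_le (P : Measure Ω) (F G : ℕ → MeasurableSpace Ω) {m : ℕ} {c : ℝ} (hc : 0 ≤ c)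
    (h : ∀ i A B, MeasurableSet[F i] A → MeasurableSet[G (i + m)] B →
      |(P A).toReal * (P B).toReal - (P (A ∩ B)).toReal| ≤ c) :
    rosenblattCoeff P F G m ≤ c := by
  refine Real.iSup_le (fun i => Real.sSup_le ?_ hc) hc
  rintro _ ⟨A, B, hA, hB, rfl⟩
  exact h i A B hA hB

variable (P : Measure Ω) [IsProbabilityMeasure P] (F G : ℕ → MeasurableSpace Ω)

lemma abs_le_rosenblattCoeff {i m : ℕ} {A B : Set Ω} (hA : MeasurableSet[F i] A)
    (hB : MeasurableSet[G (i + m)] B) :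
    |(P A).toReal * (P B).toReal - (P (A ∩ B)).toReal| ≤ rosenblattCoeff P F G m := by
  refine le_ciSup_of_le ⟨1, ?_⟩ i (le_csSup ⟨1, ?_⟩ ⟨A, B, hA, hB, rfl⟩)
  · rintro _ ⟨j, rfl⟩
    refine Real.sSup_le ?_ zero_le_one
    rintro _ ⟨A, B, -, -, rfl⟩
    exact abs_mul_sub_inter_le_one P A B
  · rintro _ ⟨A, B, -, -, rfl⟩
    exact abs_mul_sub_inter_le_one P A B

lemma rosenblattCoeff_nonneg (m : ℕ) : 0 ≤ rosenblattCoeff P F G m :=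
  (abs_nonneg _).trans (abs_le_rosenblattCoeff P F G (i := 0) (A := ∅) (B := ∅)
    (@MeasurableSet.empty _ (F 0)) (@MeasurableSet.empty _ (G (0 + m))))

lemma rosenblattCoeff_le_one (m : ℕ) : rosenblattCoeff P F G m ≤ 1 :=
  rosenblattCoeff_le P F G zero_le_one fun _ A B _ _ => abs_mul_sub_inter_le_one P A B

lemma rosenblattCoeff_antitone (hG : Antitone G) : Antitone (rosenblattCoeff P F G) :=
  fun _ _ hmn => rosenblattCoeff_le P F G (rosenblattCoeff_nonneg P F G _) fun _ _ B hA hB =>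
    abs_le_rosenblattCoeff P F G hA (hG (Nat.add_le_add_left hmn _) B hB)

end Mixing

/-- If the generalized inverse of a bounded sequence has finite moments of all orders, then all
positive powers of the sequence are summable. -/
lemma summable_rpow_of_lintegral_inv {α : ℕ → ℝ} (h0 : ∀ m, 0 ≤ α m) (h1 : ∀ m, α m ≤ 1)
    (hzero : α 0 = 1 / 2) (hanti : ∀ m m', 1 ≤ m → m ≤ m' → α m' ≤ α m)
    {αinv : ℝ → ℝ≥0∞}
    (hαinv : ∀ u, αinv u = sInf ((fun m : ℕ => (m : ℝ≥0∞)) '' {m | α m ≤ u}))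
    (hA2 : ∀ h : ℝ, 0 < h → ∫⁻ u in Set.Ioc (0 : ℝ) 1, (αinv u) ^ h ∂volume < ⊤)
    {θ : ℝ} (hθ : 0 < θ) : Summable fun m => α m ^ θ := by
  set h : ℝ := 2 / θ
  have hh : 0 < h := by positivity
  set C : ℝ := (∫⁻ u in Set.Ioc (0 : ℝ) 1, (αinv u) ^ h ∂volume).toReal
  have hC : 0 ≤ C := ENNReal.toReal_nonneg
  have key : ∀ m : ℕ, 1 ≤ m → (m : ℝ) ^ h * α m ≤ 2 * C := by
    intro m hm
    set a : ℝ := min (α m) (1 / 2)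
    have ha0 : 0 ≤ a := le_min (h0 m) (by norm_num)
    have ha : α m ≤ 2 * a := by
      rcases le_total (α m) (1 / 2) with h' | h'
      · simp only [a, min_eq_left h']; linarith [h0 m]
      · simp only [a, min_eq_right h']; linarith [h1 m]
    have hinv : ∀ u ∈ Set.Ioo 0 a, (m : ℝ≥0∞) ^ h ≤ αinv u ^ h := by
      intro u hu
      refine ENNReal.rpow_le_rpow ?_ hh.le
      rw [hαinv]
      refine le_sInf ?_
      rintro _ ⟨m', hm', rfl⟩
      have hm'u : α m' ≤ u := hm'
      have hlt : u < α m := hu.2.trans_le (min_le_left _ _)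
      have hlt' : u < 1 / 2 := hu.2.trans_le (min_le_right _ _)
      by_contra! hcon
      have hcon : m' < m := by exact_mod_cast hcon
      rcases Nat.eq_zero_or_pos m' with rfl | hpos
      · linarith
      · linarith [hanti m' m hpos hcon.le]
    have hmean : (m : ℝ≥0∞) ^ h * ENNReal.ofReal a ≤
        ∫⁻ u in Set.Ioc (0 : ℝ) 1, (αinv u) ^ h ∂volume := by
      calc (m : ℝ≥0∞) ^ h * ENNReal.ofReal a = ∫⁻ _ in Set.Ioo 0 a, (m : ℝ≥0∞) ^ h := by simp
        _ ≤ ∫⁻ u in Set.Ioo 0 a, αinv u ^ h := setLIntegral_mono' measurableSet_Ioo hinv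
        _ ≤ _ := lintegral_mono_set (show Set.Ioo 0 a ⊆ Set.Ioc 0 1 from fun u hu =>
            ⟨hu.1, hu.2.le.trans ((min_le_right _ _).trans (by norm_num))⟩)
    have hreal := ENNReal.toReal_mono (hA2 h hh).ne hmean
    rw [ENNReal.toReal_mul, ← ENNReal.toReal_rpow, ENNReal.toReal_natCast,
      ENNReal.toReal_ofReal ha0] at hreal
    have : (m : ℝ) ^ h * α m ≤ (m : ℝ) ^ h * (2 * a) := by gcongr
    linarith
  refine Summable.of_norm_bounded_eventually_nat
    ((Real.summable_one_div_nat_pow.2 one_lt_two).mul_left ((2 * C) ^ θ)) ?_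
  filter_upwards [eventually_ge_atTop 1] with m hm
  have hm' : (0 : ℝ) < m := by exact_mod_cast hm
  have h2 := rpow_le_rpow (by have := h0 m; positivity) (key m hm) hθ.le
  rw [mul_rpow (by positivity) (h0 m), ← rpow_mul hm'.le, div_mul_cancel₀ _ hθ.ne',
    rpow_two] at h2
  rw [norm_of_nonneg (rpow_nonneg (h0 m) _), mul_one_div, le_div_iff₀ (by positivity)]
  linarith

lemma sum_sum_le_of_le_sub {c : ℕ → ℕ → ℝ} (hsymm : ∀ i j, c i j = c j i) {b : ℕ → ℝ}
    (hb0 : ∀ m, 0 ≤ b m) (hb : Summable b) (hc : ∀ i j, i ≤ j → c i j ≤ b (j - i)) (k : ℕ) :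
    ∑ i ∈ Finset.range k, ∑ j ∈ Finset.range k, c i j ≤ 2 * (k * ∑' m, b m) := by
  have hrow : ∀ i, ∑ j ∈ Finset.range k, (if i ≤ j then b (j - i) else 0) ≤ ∑' m, b m := by
    intro i
    rw [← Finset.sum_filter, ← Finset.sum_image (f := b) (g := fun j => j - i)]
    · exact hb.sum_le_tsum _ fun m _ => hb0 m
    · intro j hj j' hj' h
      simp only [Finset.coe_filter, Set.mem_ofPred_eq] at hj hj'
      have h : j - i = j' - i := h
      omega
  have hall : ∑ i ∈ Finset.range k, ∑ j ∈ Finset.range k, (if i ≤ j then b (j - i) else 0) ≤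
      k * ∑' m, b m := by
    refine (Finset.sum_le_sum fun i _ => hrow i).trans ?_
    simp
  have hterm : ∀ i j, c i j ≤
      (if i ≤ j then b (j - i) else 0) + (if j ≤ i then b (i - j) else 0) := by
    intro i j
    rcases le_total i j with h | h
    · rw [if_pos h]
      have : 0 ≤ (if j ≤ i then b (i - j) else 0) := by split_ifs <;> simp [hb0]
      linarith [hc i j h]
    · rw [if_pos h]
      have : 0 ≤ (if i ≤ j then b (j - i) else 0) := by split_ifs <;> simp [hb0]
      linarith [hc j i h, hsymm i j]
  calc ∑ i ∈ Finset.range k, ∑ j ∈ Finset.range k, c i j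
      ≤ ∑ i ∈ Finset.range k, ∑ j ∈ Finset.range k,
          ((if i ≤ j then b (j - i) else 0) + (if j ≤ i then b (i - j) else 0)) :=
        Finset.sum_le_sum fun i _ => Finset.sum_le_sum fun j _ => hterm i j
    _ = ∑ i ∈ Finset.range k, ∑ j ∈ Finset.range k, (if i ≤ j then b (j - i) else 0) +
          ∑ i ∈ Finset.range k, ∑ j ∈ Finset.range k, (if i ≤ j then b (j - i) else 0) := by
        simp only [Finset.sum_add_distrib]
        congr 1
        exact Finset.sum_comm
    _ ≤ _ := by linarith

/-- Chebyshev's inequality for the number of occurrences of weakly correlated events. -/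
lemma measure_sum_indicator_le {Ω : Type*} [MeasurableSpace Ω] {P : Measure Ω}
    [IsProbabilityMeasure P] {A : ℕ → Set Ω} (hA : ∀ i, MeasurableSet (A i)) {p : ℝ} (hp : 0 < p)
    (hAp : ∀ i, P.real (A i) = p) {b : ℕ → ℝ} (hb0 : ∀ m, 0 ≤ b m) (hb : Summable b)
    (hcov : ∀ i j, i ≤ j → |P.real (A i) * P.real (A j) - P.real (A i ∩ A j)| ≤ b (j - i))
    {k : ℕ} (hk : 0 < k) :
    P {ω | ∑ i ∈ Finset.range k, (A i).indicator (fun _ => (1 : ℝ)) ω ≤ k * p / 2} ≤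
      ENNReal.ofReal (8 * (∑' m, b m) / (k * p ^ 2)) := by
  have hk' : (0 : ℝ) < k := by exact_mod_cast hk
  set f : ℕ → Ω → ℝ := fun i => (A i).indicator (fun _ => (1 : ℝ))
  have hf : ∀ i, MemLp (f i) 2 P := fun i => (memLp_const 1).indicator (hA i)
  have hmean : ∀ i, ∫ ω, f i ω ∂P = p := fun i => by
    rw [integral_indicator_const _ (hA i), hAp]; simp
  have hcv : ∀ i j, cov[f i, f j; P] = P.real (A i ∩ A j) - P.real (A i) * P.real (A j) := by
    intro i j
    rw [covariance_eq_sub (hf i) (hf j), hmean, hmean, hAp, hAp]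
    congr 1
    have : f i * f j = (A i ∩ A j).indicator (fun _ => (1 : ℝ)) := by
      ext ω
      simp only [f, Pi.mul_apply, Set.indicator_apply, Set.mem_inter_iff]
      split_ifs <;> simp_all
    rw [this, integral_indicator_const _ ((hA i).inter (hA j))]
    simp
  set X : Ω → ℝ := fun ω => ∑ i ∈ Finset.range k, f i ω
  have hX : MemLp X 2 P := memLp_finsetSum _ fun i _ => hf i
  have hEX : ∫ ω, X ω ∂P = k * p := by
    simp only [X]
    rw [integral_finsetSum _ fun i _ => (hf i).integrable one_le_two]
    simp [hmean]
  have hvar : Var[X; P] ≤ 2 * (k * ∑' m, b m) := by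
    simp only [X]
    rw [variance_fun_sum' fun i _ => hf i]
    refine sum_sum_le_of_le_sub (fun i j => covariance_comm _ _) hb0 hb (fun i j hij => ?_) k
    rw [hcv]
    have := (abs_le.1 (hcov i j hij)).1
    linarith
  calc P {ω | X ω ≤ k * p / 2} ≤ P {ω | k * p / 2 ≤ |X ω - ∫ ω', X ω' ∂P|} := by
        refine measure_mono fun ω (hω : X ω ≤ k * p / 2) => ?_
        rw [Set.mem_ofPred_eq, hEX]
        exact le_abs.2 (Or.inr (by linarith))
    _ ≤ ENNReal.ofReal (Var[X; P] / (k * p / 2) ^ 2) :=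
        meas_ge_le_variance_div_sq hX (by positivity)
    _ ≤ _ := by
        refine ENNReal.ofReal_le_ofReal ?_
        calc Var[X; P] / (k * p / 2) ^ 2 ≤ 2 * (k * ∑' m, b m) / (k * p / 2) ^ 2 := by gcongr
          _ = _ := by field_simp; ring

lemma ae_eventually_notMem_of_le {Ω : Type*} [MeasurableSpace Ω] {P : Measure Ω}
    [IsFiniteMeasure P] {s : ℕ → Set Ω} {g : ℕ → ℝ} (hg0 : ∀ n, 0 ≤ g n) (hg : Summable g)
    (h : ∀ᶠ n in atTop, P (s n) ≤ ENNReal.ofReal (g n)) :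
    ∀ᵐ ω ∂P, ∀ᶠ n in atTop, ω ∉ s n := by
  refine ae_eventually_notMem ?_
  have hsum : Summable fun n => P.real (s n) := by
    refine Summable.of_norm_bounded_eventually_nat hg ?_
    filter_upwards [h] with n hn
    rw [norm_of_nonneg measureReal_nonneg]
    exact ENNReal.toReal_le_of_le_ofReal (hg0 n) hn
  simpa using hsum.tsum_ofReal_ne_top

/-- Replace all coordinates of index at least `N` by `c`. -/
noncomputable def truncSeq {E : Type*} (c : E) (N : ℕ) (z : ℕ → E) : ℕ → E :=
  fun i => if i < N then z i else c

lemma measurable_truncSeq {E : Type*} [MeasurableSpace E] (c : E) (N : ℕ) :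
    Measurable (truncSeq c N) :=
  measurable_pi_lambda _ fun i => by
    by_cases h : i < N
    · simpa [truncSeq, h] using measurable_pi_apply i
    · simp [truncSeq, h]

lemma measurableSet_truncSeq_shift {Ω E : Type*} [MeasurableSpace E] {X : Ω → ℕ → E}
    (c : E) {N l : ℕ} {J : Set ℕ} (hJ : ∀ i < N, i + l ∈ J)
    {B : Set (ℕ → E)} (hB : MeasurableSet B) :
    MeasurableSet[⨆ j ∈ J, MeasurableSpace.comap (fun ω => X ω j) inferInstance]
      {ω | truncSeq c N (fun i => X ω (i + l)) ∈ B} := by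
  let m : MeasurableSpace Ω := ⨆ j ∈ J, MeasurableSpace.comap (fun ω => X ω j) inferInstance
  have h : Measurable[m] fun ω => truncSeq c N (fun i => X ω (i + l)) := by
    refine @measurable_pi_lambda _ _ _ m _ _ fun i => ?_
    by_cases hi : i < N
    · simp only [truncSeq, hi, if_true]
      exact (comap_measurable (fun ω => X ω (i + l))).mono
        (le_iSup₂ (f := fun j (_ : j ∈ J) => MeasurableSpace.comap (fun ω => X ω j) inferInstance)
          (i + l) (hJ i hi)) le_rfl
    · simp only [truncSeq, hi, if_false]
      exact @measurable_const _ _ _ m c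
  exact h hB

section Stationary

variable {Ω : Type*} [MeasurableSpace Ω] {P : Measure Ω} {E : Type*} [MeasurableSpace E]
  {X : Ω → ℕ → E}

lemma measure_shift_mem (hX : Measurable X)
    (hstat : Measure.map (fun ω => fun i => X ω (i + 1)) P = Measure.map X P) (l : ℕ)
    {B : Set (ℕ → E)} (hB : MeasurableSet B) :
    P {ω | (fun i => X ω (i + l)) ∈ B} = P {ω | X ω ∈ B} := by
  induction l generalizing B with
  | zero => simp
  | succ l ih =>
    have hT : Measurable fun z : ℕ → E => fun i => z (i + l) :=
      measurable_pi_lambda _ fun i => measurable_pi_apply _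
    have hX1 : Measurable fun ω => fun i => X ω (i + 1) :=
      measurable_pi_lambda _ fun i => (measurable_pi_apply _).comp hX
    have h := congrArg (fun μ : Measure (ℕ → E) => μ ((fun z : ℕ → E => fun i => z (i + l)) ⁻¹' B))
      hstat
    rw [Measure.map_apply hX1 (hT hB), Measure.map_apply hX (hT hB)] at h
    rw [← ih hB]
    exact h

/-- The number of blocks of a mixing stationary process that fall in a set of small probability
concentrates around its mean. -/
lemma exists_measure_block_count_le [IsProbabilityMeasure P] (hX : Measurable X)
    (hstat : Measure.map (fun ω => fun i => X ω (i + 1)) P = Measure.map X P)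
    {α : ℕ → ℝ} (hα : ∀ m, 1 ≤ m → α m = rosenblattCoeff P
      (fun i => ⨆ j ∈ Set.Iic i, MeasurableSpace.comap (fun ω => X ω j) inferInstance)
      (fun i => ⨆ j ∈ Set.Ici i, MeasurableSpace.comap (fun ω => X ω j) inferInstance) m)
    (hα0 : ∀ m, 0 ≤ α m) {θ : ℝ} (hθ0 : 0 < θ) (hθ1 : θ < 1) (hsum : Summable fun m => α m ^ θ)
    (c : E) :
    ∃ K : ℝ, 0 ≤ K ∧ ∀ n k : ℕ, 0 < n → 0 < k → ∀ B : Set (ℕ → E), MeasurableSet B →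
      0 < P.real {ω | truncSeq c (2 * n) (X ω) ∈ B} →
      P {ω | ∑ j ∈ Finset.range k,
          {ω | truncSeq c (2 * n) (fun i => X ω (i + j * n)) ∈ B}.indicator (fun _ => (1 : ℝ)) ω ≤
            k * P.real {ω | truncSeq c (2 * n) (X ω) ∈ B} / 2} ≤
        ENNReal.ofReal (K * P.real {ω | truncSeq c (2 * n) (X ω) ∈ B} ^ (-(1 + θ)) / k) := by
  set β : ℕ → ℝ := fun m => if m ≤ 2 then 1 else α (m - 2) ^ θ
  have hβ0 : ∀ m, 0 ≤ β m := fun m => by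
    simp only [β]; split_ifs
    exacts [zero_le_one, rpow_nonneg (hα0 _) _]
  have hβ : Summable β := by
    rw [← summable_nat_add_iff 3]
    have := (summable_nat_add_iff 1).2 hsum
    refine this.congr fun m => ?_
    simp only [β]
    rw [if_neg (by omega)]
    rfl
  refine ⟨8 * ∑' m, β m, mul_nonneg (by norm_num) (tsum_nonneg hβ0), fun n k hn hk B hB hp => ?_⟩
  set p : ℝ := P.real {ω | truncSeq c (2 * n) (X ω) ∈ B}
  set A : ℕ → Set Ω := fun j => {ω | truncSeq c (2 * n) (fun i => X ω (i + j * n)) ∈ B}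
  have hAp : ∀ j, P.real (A j) = p := fun j =>
    congrArg ENNReal.toReal (measure_shift_mem hX hstat (j * n) (measurable_truncSeq c (2 * n) hB))
  have hA : ∀ j, MeasurableSet (A j) := fun j =>
    (measurable_truncSeq c (2 * n)).comp
      (measurable_pi_lambda _ fun i => (measurable_pi_apply (i + j * n)).comp hX) hB
  have hp1 : p ≤ 1 := measureReal_le_one
  have hcovp : ∀ i j, |P.real (A i) * P.real (A j) - P.real (A i ∩ A j)| ≤ p := by
    intro i j
    have h1 : P.real (A i ∩ A j) ≤ p := (measureReal_mono inter_subset_left).trans_eq (hAp i)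
    have h2 : 0 ≤ P.real (A i ∩ A j) := measureReal_nonneg
    rw [hAp, hAp, abs_le]
    constructor <;> nlinarith
  have hcov : ∀ i j, i ≤ j →
      |P.real (A i) * P.real (A j) - P.real (A i ∩ A j)| ≤ p ^ (1 - θ) * β (j - i) := by
    intro i j hij
    by_cases h2 : j - i ≤ 2
    · simp only [β, if_pos h2, mul_one]
      refine (hcovp i j).trans ?_
      conv_lhs => rw [← rpow_one p]
      exact rpow_le_rpow_of_exponent_ge hp hp1 (by linarith)
    · have h3 : |P.real (A i) * P.real (A j) - P.real (A i ∩ A j)| ≤ α (j - i - 2) := by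
        rw [hα _ (by omega)]
        refine abs_le_rosenblattCoeff P _ _ (i := (i + 2) * n)
          (measurableSet_truncSeq_shift c (fun a ha => ?_) hB)
          (measurableSet_truncSeq_shift c (fun a ha => ?_) hB)
        · rw [Set.mem_Iic, add_mul]; omega
        · rw [Set.mem_Ici]
          obtain ⟨t, rfl⟩ : ∃ t, j = i + 2 + t := ⟨j - i - 2, by omega⟩
          have ht : t ≤ t * n := Nat.le_mul_of_pos_right t hn
          rw [add_mul (i + 2) t n]
          omega
      simp only [β, if_neg h2]
      set r := |P.real (A i) * P.real (A j) - P.real (A i ∩ A j)|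
      have hr : 0 ≤ r := abs_nonneg _
      calc r = r ^ (1 - θ) * r ^ θ := by
            rw [← rpow_add' hr (by simp)]; simp
        _ ≤ p ^ (1 - θ) * α (j - i - 2) ^ θ := by
            exact mul_le_mul (rpow_le_rpow hr (hcovp i j) (by linarith))
              (rpow_le_rpow hr h3 hθ0.le) (rpow_nonneg hr _) (rpow_nonneg hp.le _)
  refine (measure_sum_indicator_le hA hp hAp (fun m => mul_nonneg (rpow_nonneg hp.le _) (hβ0 m))
    (hβ.mul_left _) hcov hk).trans_eq ?_
  rw [tsum_mul_left]
  congr 1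
  have hpow : p ^ (1 - θ) = p ^ (-(1 + θ)) * p ^ 2 := by
    rw [← rpow_two, ← rpow_add hp]; ring_nf
  have hk' : (0 : ℝ) < k := by exact_mod_cast hk
  rw [hpow]
  field_simp

end Stationary

lemma empirical_apply {β : Type*} [MeasurableSpace β] (k : ℕ) (Z : ℕ → β) {s : Set β}
    (hs : MeasurableSet s) :
    ((k : ℝ≥0∞)⁻¹ • ∑ j ∈ Finset.Icc 1 k, Measure.dirac (Z (j - 1))) s =
      (k : ℝ≥0∞)⁻¹ * ∑ j ∈ Finset.range k, s.indicator (fun _ => 1) (Z j) := by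
  rw [Measure.smul_apply, Measure.finsetSum_apply, smul_eq_mul]
  congr 1
  simp only [Measure.dirac_apply' _ hs]
  refine Finset.sum_nbij' (fun j => j - 1) (fun j => j + 1) ?_ ?_ ?_ ?_ ?_
  · intro j hj; simp only [Finset.mem_Icc, Finset.mem_range] at *; omega
  · intro j hj; simp only [Finset.mem_Icc, Finset.mem_range] at *; omega
  · intro j hj; simp only [Finset.mem_Icc] at *; omega
  · intro j hj; simp
  · intro j hj; rfl

section Empirical

variable {Ω : Type*} [MeasurableSpace Ω] {P : Measure Ω} [IsProbabilityMeasure P]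
  {E : Type*} [MeasurableSpace E] {d : ℕ} {X : Ω → ℕ → E}
  {S : ℕ → (ℕ → E) → EuclideanSpace ℝ (Fin d)} {k : ℕ → ℕ}
  {μω : ℕ → Ω → Measure (EuclideanSpace ℝ (Fin d))} {x₀ : EuclideanSpace ℝ (Fin d)}

/-- Almost surely, the empirical measure of a ball exceeds its mean by at most a subexponential
factor. -/
lemma ae_eventually_empirical_le (hX : Measurable X)
    (hstat : Measure.map (fun ω => fun i => X ω (i + 1)) P = Measure.map X P)
    (hS : ∀ n, Measurable (S n)) (hk : ∀ n, 0 < k n)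
    (hμω : ∀ n ω, μω n ω = (k n : ℝ≥0∞)⁻¹ •
      ∑ j ∈ Finset.Icc 1 (k n),
        Measure.dirac ((n : ℝ)⁻¹ • S n (fun i => X ω (i + (j - 1) * n))))
    {ε a : ℝ} (hup : ∀ᶠ n : ℕ in atTop,
      P {ω | (n : ℝ)⁻¹ • S n (X ω) ∈ Metric.closedBall x₀ ε} ≤ ENNReal.ofReal (exp (n * a)))
    {b : ℝ} (hab : a < b) :
    ∀ᵐ ω ∂P, ∀ᶠ n : ℕ in atTop,
      μω n ω (Metric.closedBall x₀ ε) ≤ ENNReal.ofReal (exp (n * b)) := by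
  have hbc := ae_eventually_notMem_of_le (P := P)
    (s := fun n : ℕ => {ω | ENNReal.ofReal (exp (n * b)) ≤ μω n ω (Metric.closedBall x₀ ε)})
    (g := fun n : ℕ => exp (n * (a - b))) (fun n => (exp_pos _).le)
    (Real.summable_exp_nat_mul_iff.2 (sub_neg.2 hab)) ?_
  · filter_upwards [hbc] with ω hω
    filter_upwards [hω] with n hn
    exact (not_le.1 hn).le
  filter_upwards [hup] with n hn
  have hB : MeasurableSet {z : ℕ → E | (n : ℝ)⁻¹ • S n z ∈ Metric.closedBall x₀ ε} :=
    measurableSet_smul_mem_closedBall (hS n) _ _ _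
  have hval : ∀ ω, μω n ω (Metric.closedBall x₀ ε) = (k n : ℝ≥0∞)⁻¹ * ∑ j ∈ Finset.range (k n),
      {ω | (fun i => X ω (i + j * n)) ∈
        {z : ℕ → E | (n : ℝ)⁻¹ • S n z ∈ Metric.closedBall x₀ ε}}.indicator
        (fun _ => (1 : ℝ≥0∞)) ω := by
    intro ω
    rw [hμω, empirical_apply (k n) (fun j => (n : ℝ)⁻¹ • S n (fun i => X ω (i + j * n)))
      Metric.isClosed_closedBall.measurableSet]
    rfl
  have hAm : ∀ j, MeasurableSet {ω | (fun i => X ω (i + j * n)) ∈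
      {z : ℕ → E | (n : ℝ)⁻¹ • S n z ∈ Metric.closedBall x₀ ε}} := fun j =>
    (measurable_pi_lambda _ fun i => (measurable_pi_apply (i + j * n)).comp hX :
      Measurable fun ω => fun i => X ω (i + j * n)) hB
  have hmeas : Measurable fun ω => μω n ω (Metric.closedBall x₀ ε) := by
    simp only [hval]
    exact measurable_const.mul
      (Finset.measurable_fun_sum _ fun j _ => measurable_const.indicator (hAm j))
  have hmean : ∫⁻ ω, μω n ω (Metric.closedBall x₀ ε) ∂P =
      P {ω | (n : ℝ)⁻¹ • S n (X ω) ∈ Metric.closedBall x₀ ε} := by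
    simp only [hval]
    rw [lintegral_const_mul' _ _ (by simpa using (hk n).ne'),
      lintegral_finsetSum _ fun j _ => measurable_const.indicator (hAm j)]
    simp only [lintegral_indicator_const (hAm _), one_mul, measure_shift_mem hX hstat _ hB]
    rw [Finset.sum_const, Finset.card_range, nsmul_eq_mul, ← mul_assoc,
      ENNReal.inv_mul_cancel (by simpa using (hk n).ne') (ENNReal.natCast_ne_top _), one_mul]
    rfl
  have hmarkov := (mul_meas_ge_le_lintegral₀ hmeas.aemeasurable (μ := P)
    (ENNReal.ofReal (exp (n * b)))).trans (hmean.trans_le hn)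
  have hmul : ENNReal.ofReal (exp (n * (a - b))) =
      ENNReal.ofReal (exp (n * a)) / ENNReal.ofReal (exp (n * b)) := by
    rw [← ENNReal.ofReal_div_of_pos (exp_pos _), ← exp_sub, mul_sub]
  rw [hmul, ENNReal.le_div_iff_mul_le (Or.inl (by simp [exp_pos])) (Or.inl ENNReal.ofReal_ne_top),
    mul_comm]
  exact hmarkov

/-- Almost surely, the empirical measure of a ball is at least its mean up to a subexponential
factor, provided there are more than exponentially `1 / mean` many blocks. -/
lemma ae_eventually_le_empirical (hX : Measurable X)
    (hstat : Measure.map (fun ω => fun i => X ω (i + 1)) P = Measure.map X P)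
    {α : ℕ → ℝ} (hα : ∀ m, 1 ≤ m → α m = rosenblattCoeff P
      (fun i => ⨆ j ∈ Set.Iic i, MeasurableSpace.comap (fun ω => X ω j) inferInstance)
      (fun i => ⨆ j ∈ Set.Ici i, MeasurableSpace.comap (fun ω => X ω j) inferInstance) m)
    (hα0 : ∀ m, 0 ≤ α m) (hsum : ∀ θ : ℝ, 0 < θ → Summable fun m => α m ^ θ)
    (hS : ∀ n, Measurable (S n)) {c : E} {δ : ℕ → ℝ} (hδ0 : Tendsto δ atTop (𝓝 0))
    (hδ : ∀ n z, ‖S n z - S n (truncSeq c (2 * n) z)‖ ≤ n * δ n) (hk : ∀ n, 0 < k n)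
    (hμω : ∀ n ω, μω n ω = (k n : ℝ≥0∞)⁻¹ •
      ∑ j ∈ Finset.Icc 1 (k n),
        Measure.dirac ((n : ℝ)⁻¹ • S n (fun i => X ω (i + (j - 1) * n))))
    {I c' : ℝ} (hIc : I < c') (hkc : ∀ᶠ n : ℕ in atTop, exp (n * c') ≤ k n)
    (hlow : ∀ ε > 0, ∀ η > 0, ∀ᶠ n : ℕ in atTop, exp (n * (-I - η)) ≤
      P.real {ω | (n : ℝ)⁻¹ • S n (X ω) ∈ Metric.closedBall x₀ ε})
    {ε η : ℝ} (hε : 0 < ε) (hη : 0 < η) :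
    ∀ᵐ ω ∂P, ∀ᶠ n : ℕ in atTop,
      ENNReal.ofReal (exp (n * (-I - η))) ≤ μω n ω (Metric.closedBall x₀ ε) := by
  set η' : ℝ := min (η / 2) ((c' - I) / 2)
  have hη' : 0 < η' := lt_min (by linarith) (by linarith)
  have hη'1 : η' < η := (min_le_left _ _).trans_lt (by linarith)
  have hη'2 : I + η' < c' := by
    have : η' ≤ (c' - I) / 2 := min_le_right _ _
    linarith
  set θ : ℝ := min (1 / 2) ((c' - (I + η')) / (2 * (|I + η'| + 1)))
  have hθ0 : 0 < θ := lt_min (by norm_num) (div_pos (by linarith) (by positivity))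
  have hθ1 : θ < 1 := (min_le_left _ _).trans_lt (by norm_num)
  have hθ : (I + η') * (1 + θ) < c' := by
    have h1 : θ ≤ (c' - (I + η')) / (2 * (|I + η'| + 1)) := min_le_right _ _
    rw [le_div_iff₀ (by positivity)] at h1
    have h2 : (I + η') * θ ≤ |I + η'| * θ := by gcongr; exact le_abs_self _
    nlinarith
  obtain ⟨K, hK0, hK⟩ := exists_measure_block_count_le hX hstat hα hα0 hθ0 hθ1 (hsum θ hθ0) c
  set B : ℕ → Set (ℕ → E) := fun n => {z | (n : ℝ)⁻¹ • S n z ∈ Metric.closedBall x₀ (ε / 2)}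
  have hB : ∀ n, MeasurableSet (B n) := fun n => measurableSet_smul_mem_closedBall (hS n) _ _ _
  have hδε : ∀ᶠ n in atTop, δ n ≤ ε / 4 :=
    (hδ0.eventually (gt_mem_nhds (show (0 : ℝ) < ε / 4 by positivity))).mono fun _ h => h.le
  have hclose : ∀ n : ℕ, 0 < n → δ n ≤ ε / 4 → ∀ z,
      dist ((n : ℝ)⁻¹ • S n z) ((n : ℝ)⁻¹ • S n (truncSeq c (2 * n) z)) ≤ ε / 4 := by
    intro n hn hδn z
    have hn' : (0 : ℝ) < n := by exact_mod_cast hn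
    rw [dist_eq_norm, ← smul_sub, norm_smul, norm_inv, Real.norm_natCast, inv_mul_le_iff₀ hn']
    exact (hδ n z).trans (by gcongr)
  have hplow : ∀ᶠ n : ℕ in atTop, exp (n * (-I - η')) ≤
      P.real {ω | truncSeq c (2 * n) (X ω) ∈ B n} := by
    filter_upwards [hlow (ε / 4) (by positivity) η' hη', hδε, eventually_gt_atTop 0]
      with n hn hδn hn0
    have hsub : {ω | (n : ℝ)⁻¹ • S n (X ω) ∈ Metric.closedBall x₀ (ε / 4)} ⊆
        {ω | truncSeq c (2 * n) (X ω) ∈ B n} := by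
      intro ω hω
      have h1 : dist ((n : ℝ)⁻¹ • S n (X ω)) x₀ ≤ ε / 4 := hω
      have h2 := hclose n hn0 hδn (X ω)
      have h3 := dist_triangle_left ((n : ℝ)⁻¹ • S n (truncSeq c (2 * n) (X ω))) x₀
        ((n : ℝ)⁻¹ • S n (X ω))
      show dist ((n : ℝ)⁻¹ • S n (truncSeq c (2 * n) (X ω))) x₀ ≤ ε / 2
      linarith
    exact hn.trans (measureReal_mono hsub)
  have hbc := ae_eventually_notMem_of_le (P := P)
    (s := fun n : ℕ => {ω | ∑ j ∈ Finset.range (k n),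
          {ω | truncSeq c (2 * n) (fun i => X ω (i + j * n)) ∈ B n}.indicator
            (fun _ => (1 : ℝ)) ω ≤
          k n * P.real {ω | truncSeq c (2 * n) (X ω) ∈ B n} / 2})
    (g := fun n : ℕ => K * exp (n * ((I + η') * (1 + θ) - c')))
    (fun n => mul_nonneg hK0 (exp_pos _).le)
    ((Real.summable_exp_nat_mul_iff.2 (sub_neg.2 hθ)).mul_left K) ?_
  · filter_upwards [hbc] with ω hω
    filter_upwards [hω, hplow, hδε, eventually_gt_atTop 0,
      eventually_const_mul_exp_le (show -I - η < -I - η' by linarith) 2] with n hn hpn hδn hn0 hexp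
    set A : ℕ → Set Ω := fun j => {ω | truncSeq c (2 * n) (fun i => X ω (i + j * n)) ∈ B n}
    have hn := not_le.1 hn
    have hk' : (0 : ℝ) < k n := by exact_mod_cast hk n
    have hreal : exp (n * (-I - η)) * k n ≤
        ∑ j ∈ Finset.range (k n), (A j).indicator (fun _ => (1 : ℝ)) ω := by
      refine le_trans ?_ hn.le
      nlinarith
    rw [hμω, empirical_apply (k n) (fun j => (n : ℝ)⁻¹ • S n (fun i => X ω (i + j * n)))
      Metric.isClosed_closedBall.measurableSet, mul_comm ((k n : ℝ≥0∞)⁻¹), ← div_eq_mul_inv,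
      ENNReal.le_div_iff_mul_le (Or.inl (by simpa using (hk n).ne'))
        (Or.inl (ENNReal.natCast_ne_top _)),
      ← ENNReal.ofReal_natCast, ← ENNReal.ofReal_mul (exp_pos _).le]
    refine (ENNReal.ofReal_le_ofReal hreal).trans ?_
    rw [ENNReal.ofReal_sum_of_nonneg fun j _ => Set.indicator_nonneg (fun _ _ => zero_le_one) _]
    refine Finset.sum_le_sum fun j _ => ?_
    by_cases hj : ω ∈ A j
    · have h1 : dist ((n : ℝ)⁻¹ • S n (truncSeq c (2 * n) (fun i => X ω (i + j * n)))) x₀ ≤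
        ε / 2 := hj
      have h2 := hclose n hn0 hδn (fun i => X ω (i + j * n))
      have h3 : (n : ℝ)⁻¹ • S n (fun i => X ω (i + j * n)) ∈ Metric.closedBall x₀ ε := by
        rw [Metric.mem_closedBall]
        linarith [dist_triangle ((n : ℝ)⁻¹ • S n (fun i => X ω (i + j * n)))
          ((n : ℝ)⁻¹ • S n (truncSeq c (2 * n) (fun i => X ω (i + j * n)))) x₀]
      rw [Set.indicator_of_mem h3, Set.indicator_of_mem hj]
      simp
    · rw [Set.indicator_of_notMem hj]
      simp
  · filter_upwards [hplow, hkc, eventually_gt_atTop 0] with n hpn hkn hn0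
    have hp0 := (exp_pos _).trans_le hpn
    refine (hK n (k n) hn0 (hk n) (B n) (hB n) hp0).trans (ENNReal.ofReal_le_ofReal ?_)
    have hpow : P.real {ω | truncSeq c (2 * n) (X ω) ∈ B n} ^ (-(1 + θ)) ≤
        exp (n * ((I + η') * (1 + θ))) := by
      refine (rpow_le_rpow_of_nonpos (exp_pos _) hpn (by linarith)).trans_eq ?_
      rw [← exp_mul]
      ring_nf
    have hk' : (0 : ℝ) < k n := by exact_mod_cast hk n
    calc _ ≤ K * exp (n * ((I + η') * (1 + θ))) / exp (n * c') := by gcongr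
      _ = _ := by rw [mul_div_assoc, ← exp_sub, mul_sub]

end Empirical

/-- Exponential bounds on the measures of small balls give the convergence of the exponential
rates of these balls as the radius tends to zero. -/
lemma tendsto_liminf_limsup_inv_mul_log_closedBall {V : Type*} [PseudoMetricSpace V]
    [MeasurableSpace V] {μ : ℕ → Measure V} {x₀ : V} {I C : ℝ}
    (hlow : ∀ q : ℕ, ∀ᶠ n : ℕ in atTop, ENNReal.ofReal (exp (n * (-I - 1 / ((q : ℝ) + 1)))) ≤
      μ n (Metric.closedBall x₀ (1 / ((q : ℝ) + 1))))
    (hup : ∀ q : ℕ, ∀ᶠ n : ℕ in atTop, μ n (Metric.closedBall x₀ (1 / ((q : ℝ) + 1))) ≤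
      ENNReal.ofReal (exp (n * (-I + C * (1 / ((q : ℝ) + 1)))))) :
    Tendsto (fun ε : ℝ => Filter.atTop.liminf (fun n : ℕ =>
        ((n : ℝ)⁻¹ : EReal) * ENNReal.log (μ n (Metric.closedBall x₀ ε))))
      (𝓝[>] 0) (𝓝 (-(I : EReal))) ∧
    Tendsto (fun ε : ℝ => Filter.atTop.limsup (fun n : ℕ =>
        ((n : ℝ)⁻¹ : EReal) * ENNReal.log (μ n (Metric.closedBall x₀ ε))))
      (𝓝[>] 0) (𝓝 (-(I : EReal))) := by
  have hL : ∀ ε > 0, ∀ a < -(I : EReal), a < Filter.atTop.liminf (fun n : ℕ =>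
      ((n : ℝ)⁻¹ : EReal) * ENNReal.log (μ n (Metric.closedBall x₀ ε))) := by
    intro ε hε a ha
    obtain ⟨r, har, hr⟩ := EReal.lt_iff_exists_real_btwn.1 ha
    have hr' : r < -I := by exact_mod_cast hr
    refine har.trans_le ?_
    obtain ⟨q, hq⟩ := exists_nat_one_div_lt (lt_min hε (show 0 < -I - r by linarith))
    refine le_liminf_of_le (by isBoundedDefault) ?_
    filter_upwards [hlow q, eventually_gt_atTop 0] with n hn hn0
    rw [le_inv_mul_log_iff hn0]
    refine (ENNReal.ofReal_le_ofReal (exp_le_exp.2 ?_)).trans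
      (hn.trans (measure_mono (Metric.closedBall_subset_closedBall
        (hq.le.trans (min_le_left _ _)))))
    have := hq.le.trans (min_le_right _ _)
    gcongr
    linarith
  have hU : ∀ b > -(I : EReal), ∀ᶠ ε in 𝓝[>] (0 : ℝ), Filter.atTop.limsup (fun n : ℕ =>
      ((n : ℝ)⁻¹ : EReal) * ENNReal.log (μ n (Metric.closedBall x₀ ε))) < b := by
    intro b hb
    obtain ⟨r, hr, hrb⟩ := EReal.lt_iff_exists_real_btwn.1 hb
    have hr' : -I < r := by exact_mod_cast hr
    have hlim : Tendsto (fun q : ℕ => C * (1 / ((q : ℝ) + 1))) atTop (𝓝 (C * 0)) :=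
      tendsto_one_div_add_atTop_nhds_zero_nat.const_mul C
    obtain ⟨q, hq⟩ := (hlim.eventually (gt_mem_nhds (show C * 0 < r + I by
      rw [mul_zero]; linarith))).exists
    filter_upwards [Ioc_mem_nhdsGT (show (0 : ℝ) < 1 / ((q : ℝ) + 1) by positivity)] with ε hε
    refine lt_of_le_of_lt ?_ hrb
    refine limsup_le_of_le (by isBoundedDefault) ?_
    filter_upwards [hup q, eventually_gt_atTop 0] with n hn hn0
    rw [inv_mul_log_le_iff hn0]
    refine (measure_mono (Metric.closedBall_subset_closedBall hε.2)).trans (hn.trans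
      (ENNReal.ofReal_le_ofReal (exp_le_exp.2 ?_)))
    gcongr
    linarith
  refine ⟨tendsto_order.2 ⟨fun a ha => ?_, fun b hb => ?_⟩,
    tendsto_order.2 ⟨fun a ha => ?_, hU⟩⟩
  · filter_upwards [self_mem_nhdsWithin] with ε hε using hL ε hε a ha
  · filter_upwards [hU b hb] with ε hε using (liminf_le_limsup).trans_lt hε
  · filter_upwards [self_mem_nhdsWithin] with ε hε using (hL ε hε a ha).trans_le liminf_le_limsup

/-- At an exposed point, the Legendre transform over a neighbourhood of the exposing parameter is
attained there. -/
lemma iSup_inner_sub_eq {Ω : Type*} [MeasurableSpace Ω] {P : Measure Ω}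
    [IsProbabilityMeasure P] {d : ℕ}
    {Y : ℕ → Ω → EuclideanSpace ℝ (Fin d)} (hY : ∀ n, Measurable (Y n))
    {D : Set (EuclideanSpace ℝ (Fin d))} (hD : IsOpen D) {Λ : EuclideanSpace ℝ (Fin d) → ℝ}
    (hup : ∀ lam ∈ D, ∀ η > 0, ∀ᶠ n : ℕ in atTop,
      ∫⁻ ω, ENNReal.ofReal (exp ⟪lam, Y n ω⟫) ∂P ≤ ENNReal.ofReal (exp (n * (Λ lam + η))))
    (hlow : ∀ lam ∈ D, ∀ η > 0, ∀ᶠ n : ℕ in atTop,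
      ENNReal.ofReal (exp (n * (Λ lam - η))) ≤ ∫⁻ ω, ENNReal.ofReal (exp ⟪lam, Y n ω⟫) ∂P)
    {lam₀ x₀ : EuclideanSpace ℝ (Fin d)} (hlam₀ : lam₀ ∈ D) (hx₀ : HasGradientAt Λ x₀ lam₀) :
    ⨆ lam : D, (⟪(lam : EuclideanSpace ℝ (Fin d)), x₀⟫ - Λ lam) = ⟪lam₀, x₀⟫ - Λ lam₀ := by
  have hle : ∀ lam : D, ⟪(lam : EuclideanSpace ℝ (Fin d)), x₀⟫ - Λ lam ≤ ⟪lam₀, x₀⟫ - Λ lam₀ := by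
    rintro ⟨lam, hlam⟩
    refine le_of_forall_pos_le_add fun t ht => ?_
    set ε : ℝ := t / (‖lam‖ + 2)
    have hε : 0 < ε := by positivity
    obtain ⟨n, hn1, hn2, hn0⟩ := ((eventually_exp_le_measureReal_closedBall hY hD hup hlow hlam₀ hx₀
      hε hε).and ((hup lam hlam ε hε).and (eventually_gt_atTop 0))).exists
    have h1 := measure_closedBall_le_exp (P := P) (hY n) hn0 lam x₀ ε
    have h2 := h1.trans (mul_le_mul_right hn2 _)
    rw [← ENNReal.ofReal_mul (exp_pos _).le, ← exp_add,
      ENNReal.le_ofReal_iff_toReal_le (measure_ne_top _ _) (exp_pos _).le] at h2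
    have h3 := exp_le_exp.1 (hn1.trans h2)
    have hn' : (0 : ℝ) < n := by exact_mod_cast hn0
    have h4 : (n : ℝ) * (⟪lam, x₀⟫ - Λ lam) ≤
        n * (⟪lam₀, x₀⟫ - Λ lam₀ + (‖lam‖ + 2) * ε) := by linarith
    have h5 : (‖lam‖ + 2) * ε = t := mul_div_cancel₀ _ (by positivity)
    rw [h5] at h4
    exact le_of_mul_le_mul_left h4 hn'
  have : Nonempty D := ⟨⟨lam₀, hlam₀⟩⟩
  exact le_antisymm (ciSup_le hle) (le_ciSup (f := fun lam : D =>
    ⟪(lam : EuclideanSpace ℝ (Fin d)), x₀⟫ - Λ lam) ⟨_, Set.forall_mem_range.2 hle⟩ ⟨lam₀, hlam₀⟩)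

/-- **Theorem 5(2), first part.**
Under (A1'), (A2), (A3), if `λ₀ ∈ D`, `Λ` is differentiable at `λ₀` with `x₀ = ∇Λ(λ₀)`,
and `liminf (log k(n))/n > Λ*(x₀)`, then almost surely
`lim_{ε→0} lim_{n→∞} (1/n) log μₙ^ω(B(x₀,ε)) = -Λ*(x₀)` (the limit over `n` expressed
through the liminf and the limsup, both of which converge to `-Λ*(x₀)` as `ε → 0⁺`). -/
theorem theorem5_part2_first
    {Ω : Type*} [MeasurableSpace Ω] (P : Measure Ω) [IsProbabilityMeasure P]
    {E : Type*} [MeasurableSpace E] (d : ℕ)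
    -- the stationary process
    (Xseq : Ω → ℕ → E) (hXmeas : Measurable Xseq)
    (hstat : Measure.map (fun ω => fun i => Xseq ω (i + 1)) P = Measure.map Xseq P)
    -- the ℝ^d-valued functionals SₙΦ
    (SΦ : ℕ → (ℕ → E) → EuclideanSpace ℝ (Fin d)) (hSΦmeas : ∀ n, Measurable (SΦ n))
    -- the logarithmic moment generating functions Λₙ
    (Lmgf : ℕ → EuclideanSpace ℝ (Fin d) → EReal)
    (hLmgf : ∀ n lam, Lmgf n lam = ((n : ℝ)⁻¹ : EReal) *
      ENNReal.log (∫⁻ ω, ENNReal.ofReal (Real.exp ⟪lam, SΦ n (Xseq ω)⟫) ∂P))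
    -- (A1'): Λₙ → Λ, finite on a convex open set D
    (D : Set (EuclideanSpace ℝ (Fin d))) (hDopen : IsOpen D) (hDconv : Convex ℝ D)
    (Λ : EuclideanSpace ℝ (Fin d) → ℝ)
    (hΛ : ∀ lam ∈ D, Tendsto (fun n => Lmgf n lam) atTop (nhds ((Λ lam : ℝ) : EReal)))
    -- the Fenchel-Legendre transform of Λ
    (Λstar : EuclideanSpace ℝ (Fin d) → ℝ)
    (hΛstar : ∀ x, Λstar x = ⨆ lam : D, (⟪(lam : EuclideanSpace ℝ (Fin d)), x⟫ - Λ lam))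
    -- (A2): mixing
    (alphaX : ℕ → ℝ) (halpha0 : alphaX 0 = 1 / 2)
    (halpha : ∀ m, 1 ≤ m → alphaX m = ⨆ i : ℕ, sSup {r : ℝ | ∃ A B : Set Ω,
      MeasurableSet[⨆ kk ∈ Set.Iic i,
        MeasurableSpace.comap (fun ω => Xseq ω kk) inferInstance] A ∧
      MeasurableSet[⨆ jj ∈ Set.Ici (i + m),
        MeasurableSpace.comap (fun ω => Xseq ω jj) inferInstance] B ∧
      r = |(P A).toReal * (P B).toReal - (P (A ∩ B)).toReal|})
    (αinv : ℝ → ℝ≥0∞)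
    (hαinv : ∀ u, αinv u = sInf ((fun m : ℕ => (m : ℝ≥0∞)) '' {m | alphaX m ≤ u}))
    (hA2 : ∀ h : ℝ, 0 < h → ∫⁻ u in Set.Ioc (0 : ℝ) 1, (αinv u) ^ h ∂volume < ⊤)
    -- (A3): approximation by functions of 2n coordinates
    (SΦapp : ℕ → (ℕ → E) → EuclideanSpace ℝ (Fin d))
    (happdep : ∀ n (z z' : ℕ → E), (∀ i < 2 * n, z i = z' i) → SΦapp n z = SΦapp n z')
    (δ : ℕ → ℝ) (hδ0 : Tendsto δ atTop (nhds 0))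
    (hδ : ∀ n z, ‖SΦ n z - SΦapp n z‖ ≤ (n : ℝ) * δ n)
    -- the sequence k(n)
    (k : ℕ → ℕ) (hkpos : ∀ n, 0 < k n)
    -- the empirical measures μₙ^ω
    (μω : ℕ → Ω → Measure (EuclideanSpace ℝ (Fin d)))
    (hμω : ∀ n ω, μω n ω = (k n : ℝ≥0∞)⁻¹ •
      ∑ j ∈ Finset.Icc 1 (k n),
        Measure.dirac ((n : ℝ)⁻¹ • SΦ n (fun i => Xseq ω (i + (j - 1) * n))))
    -- λ₀ ∈ D at which Λ is differentiable, with gradient x₀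
    (lam₀ : EuclideanSpace ℝ (Fin d)) (hlam₀ : lam₀ ∈ D)
    (x₀ : EuclideanSpace ℝ (Fin d)) (hx₀ : HasGradientAt Λ x₀ lam₀)
    (hliminf : (Λstar x₀ : EReal) <
      Filter.atTop.liminf (fun n => ((Real.log (k n) / n : ℝ) : EReal))) :
    ∀ᵐ ω ∂P,
      Tendsto (fun ε : ℝ =>
          Filter.atTop.liminf (fun n : ℕ =>
            ((n : ℝ)⁻¹ : EReal) * ENNReal.log (μω n ω (Metric.closedBall x₀ ε))))
        (nhdsWithin 0 (Set.Ioi 0)) (nhds (-(Λstar x₀ : EReal))) ∧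
      Tendsto (fun ε : ℝ =>
          Filter.atTop.limsup (fun n : ℕ =>
            ((n : ℝ)⁻¹ : EReal) * ENNReal.log (μω n ω (Metric.closedBall x₀ ε))))
        (nhdsWithin 0 (Set.Ioi 0)) (nhds (-(Λstar x₀ : EReal))) := by
  set I : ℝ := Λstar x₀
  have hY : ∀ n, Measurable fun ω => SΦ n (Xseq ω) := fun n => (hSΦmeas n).comp hXmeas
  have hup : ∀ lam ∈ D, ∀ η > 0, ∀ᶠ n : ℕ in atTop,
      ∫⁻ ω, ENNReal.ofReal (exp ⟪lam, SΦ n (Xseq ω)⟫) ∂P ≤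
        ENNReal.ofReal (exp (n * (Λ lam + η))) := by
    intro lam hlam η hη
    filter_upwards [(hΛ lam hlam).eventually (gt_mem_nhds (a := ((Λ lam + η : ℝ) : EReal))
      (EReal.coe_lt_coe_iff.2 (lt_add_of_pos_right _ hη))), eventually_gt_atTop 0] with n hn hn0
    rw [hLmgf] at hn
    exact (inv_mul_log_le_iff hn0 _ _).1 hn.le
  have hlow : ∀ lam ∈ D, ∀ η > 0, ∀ᶠ n : ℕ in atTop,
      ENNReal.ofReal (exp (n * (Λ lam - η))) ≤
        ∫⁻ ω, ENNReal.ofReal (exp ⟪lam, SΦ n (Xseq ω)⟫) ∂P := by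
    intro lam hlam η hη
    filter_upwards [(hΛ lam hlam).eventually (lt_mem_nhds (a := ((Λ lam - η : ℝ) : EReal))
      (EReal.coe_lt_coe_iff.2 (sub_lt_self _ hη))), eventually_gt_atTop 0] with n hn hn0
    rw [hLmgf] at hn
    exact (le_inv_mul_log_iff hn0 _ _).1 hn.le
  have hI : I = ⟪lam₀, x₀⟫ - Λ lam₀ :=
    (hΛstar x₀).trans (iSup_inner_sub_eq hY hDopen hup hlow hlam₀ hx₀)
  set F : ℕ → MeasurableSpace Ω := fun i =>
    ⨆ j ∈ Set.Iic i, MeasurableSpace.comap (fun ω => Xseq ω j) inferInstance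
  set G : ℕ → MeasurableSpace Ω := fun i =>
    ⨆ j ∈ Set.Ici i, MeasurableSpace.comap (fun ω => Xseq ω j) inferInstance
  have hG : Antitone G := fun a b hab => biSup_mono fun j hj => le_trans hab hj
  have hα : ∀ m, 1 ≤ m → alphaX m = rosenblattCoeff P F G m := halpha
  have hα0 : ∀ m, 0 ≤ alphaX m := by
    intro m
    rcases Nat.eq_zero_or_pos m with rfl | hm
    · rw [halpha0]; norm_num
    · rw [hα m hm]; exact rosenblattCoeff_nonneg P F G m
  have hα1 : ∀ m, alphaX m ≤ 1 := by
    intro m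
    rcases Nat.eq_zero_or_pos m with rfl | hm
    · rw [halpha0]; norm_num
    · rw [hα m hm]; exact rosenblattCoeff_le_one P F G m
  have hanti : ∀ m m', 1 ≤ m → m ≤ m' → alphaX m' ≤ alphaX m := by
    intro m m' hm hmm
    rw [hα m hm, hα m' (hm.trans hmm)]
    exact rosenblattCoeff_antitone P F G hG hmm
  have hsum : ∀ θ : ℝ, 0 < θ → Summable fun m => alphaX m ^ θ := fun θ hθ =>
    summable_rpow_of_lintegral_inv hα0 hα1 halpha0 hanti hαinv hA2 hθ
  obtain ⟨ω₀⟩ : Nonempty Ω := nonempty_of_isProbabilityMeasure P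
  set c : E := Xseq ω₀ 0
  have hδc : ∀ n z, ‖SΦ n z - SΦ n (truncSeq c (2 * n) z)‖ ≤ n * (2 * δ n) := by
    intro n z
    have h1 := hδ n z
    have h2 := hδ n (truncSeq c (2 * n) z)
    rw [happdep n (truncSeq c (2 * n) z) z fun i hi => if_pos hi] at h2
    have h3 := norm_sub_le_norm_sub_add_norm_sub (SΦ n z) (SΦapp n z) (SΦ n (truncSeq c (2 * n) z))
    rw [norm_sub_rev (SΦapp n z)] at h3
    linarith
  have hδ2 : Tendsto (fun n => 2 * δ n) atTop (𝓝 0) := by simpa using hδ0.const_mul 2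
  obtain ⟨c', hIc, hc'⟩ := EReal.lt_iff_exists_real_btwn.1 hliminf
  have hkc : ∀ᶠ n : ℕ in atTop, exp (n * c') ≤ k n := by
    filter_upwards [eventually_lt_of_lt_liminf hc', eventually_gt_atTop 0] with n hn hn0
    have hn' : (0 : ℝ) < n := by exact_mod_cast hn0
    have h1 : c' < Real.log (k n) / n := by exact_mod_cast hn
    rw [lt_div_iff₀ hn', mul_comm] at h1
    exact ((lt_log_iff_exp_lt (by exact_mod_cast hkpos n)).1 h1).le
  have hball : ∀ ε > 0, ∀ η > 0, ∀ᶠ n : ℕ in atTop, exp (n * (-I - η)) ≤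
      P.real {ω | (n : ℝ)⁻¹ • SΦ n (Xseq ω) ∈ Metric.closedBall x₀ ε} := by
    intro ε hε η hη
    rw [hI]
    exact eventually_exp_le_measureReal_closedBall hY hDopen hup hlow hlam₀ hx₀ hε hη
  have hchernoff : ∀ ε > 0, ∀ᶠ n : ℕ in atTop,
      P {ω | (n : ℝ)⁻¹ • SΦ n (Xseq ω) ∈ Metric.closedBall x₀ ε} ≤
        ENNReal.ofReal (exp (n * (-I + (‖lam₀‖ + 1) * ε))) := by
    intro ε hε
    filter_upwards [hup lam₀ hlam₀ ε hε, eventually_gt_atTop 0] with n hn hn0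
    refine ((measure_closedBall_le_exp (hY n) hn0 lam₀ x₀ ε).trans
      (mul_le_mul_right hn _)).trans_eq ?_
    rw [← ENNReal.ofReal_mul (exp_pos _).le, ← exp_add, hI]
    ring_nf
  have hlow_ae : ∀ᵐ ω ∂P, ∀ q : ℕ, ∀ᶠ n : ℕ in atTop,
      ENNReal.ofReal (exp (n * (-I - 1 / ((q : ℝ) + 1)))) ≤
        μω n ω (Metric.closedBall x₀ (1 / ((q : ℝ) + 1))) :=
    ae_all_iff.2 fun q => ae_eventually_le_empirical hXmeas hstat hα hα0 hsum hSΦmeas hδ2 hδc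
      hkpos hμω (by exact_mod_cast hIc) hkc hball (by positivity) (by positivity)
  have hup_ae : ∀ᵐ ω ∂P, ∀ q : ℕ, ∀ᶠ n : ℕ in atTop,
      μω n ω (Metric.closedBall x₀ (1 / ((q : ℝ) + 1))) ≤
        ENNReal.ofReal (exp (n * (-I + (‖lam₀‖ + 2) * (1 / ((q : ℝ) + 1))))) :=
    ae_all_iff.2 fun q => ae_eventually_empirical_le hXmeas hstat hSΦmeas hkpos hμω
      (hchernoff _ (by positivity)) (by gcongr; linarith)
  filter_upwards [hlow_ae, hup_ae] with ω h1 h2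
  exact tendsto_liminf_limsup_inv_mul_log_closedBall h1 h2
end

section
/- Let (Y_j)_{j≥1} be a real-valued, centered, stationary process. For every p ∈ (1,2), every ε > 0 and every N ≥ 1, one has E[|Σ_{j=1}^N Y_j|^p] ≤ C_p · N · (∫_0^1 (α_Y^{-1}(u))^{(p−1)(1+ε)/ε} du)^{ε/(1+ε)} · (E[|Y₁|^{(1+ε)p}])^{1/(1+ε)}, where C_p = 5^p · p(5−2p)/((p−1)(2−p)). (Corollary 2.) -/
open MeasureTheory ProbabilityTheory Filter Set Real
open scoped ENNReal NNReal Classical Topology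

/-- The truncation of a real number to the interval `[-x, x]`. -/
noncomputable def clip (x s : ℝ) : ℝ := max (-x) (min x s)

/-- The Huber function at level `x`: quadratic on `[-x, x]` and affine outside, with derivative
`clip x`. -/
noncomputable def huber (x s : ℝ) : ℝ := s * clip x s - clip x s ^ 2 / 2

lemma continuous_clip_uncurry : Continuous fun z : ℝ × ℝ => clip z.1 z.2 := by
  unfold clip; fun_prop

lemma continuous_huber_uncurry : Continuous fun z : ℝ × ℝ => huber z.1 z.2 := by
  unfold huber
  have := continuous_clip_uncurry
  fun_prop

lemma measurable_clip (x : ℝ) : Measurable (clip x) := by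
  unfold clip; fun_prop

lemma measurable_huber (x : ℝ) : Measurable (huber x) :=
  (continuous_huber_uncurry.comp (Continuous.prodMk_right x)).measurable

lemma clip_zero {x : ℝ} (hx : 0 ≤ x) : clip x 0 = 0 := by simp [clip, hx]

lemma huber_zero (x : ℝ) (hx : 0 ≤ x) : huber x 0 = 0 := by simp [huber, clip_zero hx]

lemma clip_cases {x : ℝ} (hx : 0 ≤ x) (s : ℝ) :
    (s ≤ -x ∧ clip x s = -x) ∨ (-x ≤ s ∧ s ≤ x ∧ clip x s = s) ∨ (x ≤ s ∧ clip x s = x) := by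
  unfold clip
  rcases le_total s (-x) with h | h
  · left; refine ⟨h, ?_⟩; rw [min_eq_right (by linarith), max_eq_left h]
  rcases le_total s x with h' | h'
  · right; left; refine ⟨h, h', ?_⟩; rw [min_eq_right h', max_eq_right h]
  · right; right; refine ⟨h', ?_⟩; rw [min_eq_left h', max_eq_right (by linarith)]

lemma abs_clip_le {x : ℝ} (hx : 0 ≤ x) (s : ℝ) : |clip x s| ≤ x := by
  rw [abs_le]
  rcases clip_cases hx s with ⟨_, h⟩ | ⟨_, _, h⟩ | ⟨_, h⟩ <;> rw [h] <;> constructor <;> linarith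

lemma abs_clip_le_abs {x : ℝ} (hx : 0 ≤ x) (s : ℝ) : |clip x s| ≤ |s| := by
  rcases clip_cases hx s with ⟨h', h⟩ | ⟨_, _, h⟩ | ⟨h', h⟩ <;> rw [h]
  · rw [abs_neg, abs_of_nonneg hx, abs_of_nonpos (by linarith)]; linarith
  · rw [abs_of_nonneg hx, abs_of_nonneg (by linarith)]; linarith

lemma abs_sub_clip {x : ℝ} (hx : 0 ≤ x) (s : ℝ) : |s - clip x s| = max (|s| - x) 0 := by
  rcases clip_cases hx s with ⟨h', h⟩ | ⟨h1, h2, h⟩ | ⟨h', h⟩ <;> rw [h]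
  · rw [abs_of_nonpos (by linarith), abs_of_nonpos (by linarith : s ≤ 0),
      max_eq_left (by linarith)]
    ring
  · rw [sub_self, abs_zero, max_eq_right]; linarith [abs_le.2 ⟨h1, h2⟩]
  · rw [abs_of_nonneg (by linarith), abs_of_nonneg (by linarith : 0 ≤ s),
      max_eq_left (by linarith)]

lemma abs_clip_add_sub_clip_le {x : ℝ} (hx : 0 ≤ x) (a b : ℝ) :
    |clip x (a + b) - clip x a| ≤ |b| := by
  have h1 := le_abs_self b
  have h2 := neg_abs_le b
  have h3 := abs_nonneg b
  rw [abs_le]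
  rcases clip_cases hx a with ⟨h', h⟩ | ⟨_, _, h⟩ | ⟨h', h⟩ <;>
    rcases clip_cases hx (a + b) with ⟨g', g⟩ | ⟨_, _, g⟩ | ⟨g', g⟩ <;>
      rw [h, g] <;> constructor <;> linarith

lemma huber_nonneg {x : ℝ} (hx : 0 ≤ x) (s : ℝ) : 0 ≤ huber x s := by
  unfold huber
  rcases clip_cases hx s with ⟨h', h⟩ | ⟨_, _, h⟩ | ⟨h', h⟩ <;> rw [h] <;> nlinarith

lemma huber_add_le {x : ℝ} (hx : 0 ≤ x) (a b : ℝ) :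
    huber x (a + b) ≤ huber x a + x * |b| := by
  have h1 := le_abs_self b
  have h2 := neg_abs_le b
  unfold huber
  rcases clip_cases hx a with ⟨h', h⟩ | ⟨h1', h2', h⟩ | ⟨h', h⟩ <;>
    rcases clip_cases hx (a + b) with ⟨g', g⟩ | ⟨g1', g2', g⟩ | ⟨g', g⟩ <;>
      rw [h, g] <;> nlinarith [sq_nonneg (a - x), sq_nonneg (a + x), sq_nonneg b]

lemma huber_le {x : ℝ} (hx : 0 ≤ x) (s : ℝ) : huber x s ≤ x * |s| := by
  simpa [huber_zero x hx] using huber_add_le hx 0 s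

lemma huber_add_sub_le {x : ℝ} (hx : 0 ≤ x) (a b : ℝ) :
    huber x (a + b) ≤ huber x a + b * clip x a + 2 * (|b| * min x |b|) := by
  have hb := abs_nonneg b
  have key : (clip x (a + b) - clip x a) * b ≤ 2 * (|b| * min x |b|) := by
    have e1 := abs_clip_add_sub_clip_le hx a b
    have e2 : |clip x (a + b) - clip x a| ≤ 2 * x := by
      have := abs_sub (clip x (a + b)) (clip x a)
      linarith [abs_clip_le hx a, abs_clip_le hx (a + b)]
    have e3 : |clip x (a + b) - clip x a| ≤ 2 * min x |b| := by
      rcases min_cases x |b| with ⟨h, _⟩ | ⟨h, _⟩ <;> rw [h] <;> linarith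
    calc _ ≤ |(clip x (a + b) - clip x a) * b| := le_abs_self _
      _ = |clip x (a + b) - clip x a| * |b| := abs_mul _ _
      _ ≤ 2 * min x |b| * |b| := by gcongr
      _ = _ := by ring
  have conv : huber x (a + b) ≤ huber x a + b * clip x (a + b) := by
    unfold huber
    rcases clip_cases hx a with ⟨h', h⟩ | ⟨h1', h2', h⟩ | ⟨h', h⟩ <;>
      rcases clip_cases hx (a + b) with ⟨g', g⟩ | ⟨g1', g2', g⟩ | ⟨g', g⟩ <;>
        rw [h, g] <;> nlinarith [sq_nonneg (a - x), sq_nonneg (a + x), sq_nonneg b]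
  linarith

lemma le_huber {x s : ℝ} (hx : 0 ≤ x) (hs : x ≤ |s|) : x * |s| / 2 ≤ huber x s := by
  unfold huber
  rcases clip_cases hx s with ⟨h', h⟩ | ⟨h1', h2', h⟩ | ⟨h', h⟩ <;> rw [h]
  · rw [abs_of_nonpos (by linarith)]; nlinarith
  · have : |s| = x := le_antisymm (abs_le.2 ⟨h1', h2'⟩) hs
    rw [this]; nlinarith [sq_abs s]
  · rw [abs_of_nonneg (by linarith)]; nlinarith

lemma lintegral_Ioc_rpow {r c : ℝ} (hr : -1 < r) (hc : 0 ≤ c) :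
    ∫⁻ x in Ioc 0 c, ENNReal.ofReal (x ^ r) = ENNReal.ofReal (c ^ (r + 1) / (r + 1)) := by
  rw [← ofReal_integral_eq_lintegral_ofReal, ← intervalIntegral.integral_of_le hc,
    integral_rpow (Or.inl hr), Real.zero_rpow (by linarith), sub_zero]
  · exact (intervalIntegrable_iff_integrableOn_Ioc_of_le hc).1
      (intervalIntegral.intervalIntegrable_rpow' hr)
  · filter_upwards [ae_restrict_mem measurableSet_Ioc] with x hx
    exact Real.rpow_nonneg hx.1.le _

lemma lintegral_Ioi_rpow {r c : ℝ} (hr : r < -1) (hc : 0 < c) :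
    ∫⁻ x in Ioi c, ENNReal.ofReal (x ^ r) = ENNReal.ofReal (c ^ (r + 1) / (-(r + 1))) := by
  rw [← ofReal_integral_eq_lintegral_ofReal, integral_Ioi_rpow_of_lt hr hc]
  · congr 1; rw [div_neg, neg_div]
  · exact integrableOn_Ioi_rpow_of_lt hr hc
  · filter_upwards [ae_restrict_mem measurableSet_Ioi] with x hx
    exact Real.rpow_nonneg (hc.trans hx).le _

/-- A power of `|s|` is dominated by a mixture of Huber functions. -/
lemma abs_rpow_le_lintegral_huber {p : ℝ} (hp : 1 < p) (s : ℝ) :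
    ENNReal.ofReal |s| ^ p ≤ ENNReal.ofReal (2 * (p - 1)) *
      ∫⁻ x in Ioi (0 : ℝ), ENNReal.ofReal (x ^ (p - 3)) * ENNReal.ofReal (huber x s) := by
  have hs := abs_nonneg s
  have h1 : ∫⁻ x in Ioc (0 : ℝ) |s|, ENNReal.ofReal (|s| / 2) * ENNReal.ofReal (x ^ (p - 2)) ≤
      ∫⁻ x in Ioi (0 : ℝ), ENNReal.ofReal (x ^ (p - 3)) * ENNReal.ofReal (huber x s) := by
    refine le_trans ?_ (lintegral_mono_set (s := Ioc 0 |s|) fun x hx => hx.1)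
    refine setLIntegral_mono' measurableSet_Ioc fun x hx => ?_
    rw [← ENNReal.ofReal_mul (by positivity), ← ENNReal.ofReal_mul (Real.rpow_nonneg hx.1.le _)]
    refine ENNReal.ofReal_le_ofReal ?_
    have e : x ^ (p - 2) = x ^ (p - 3) * x := by
      rw [← Real.rpow_add_one hx.1.ne']; congr 1; ring
    rw [e]
    have := mul_le_mul_of_nonneg_left (le_huber hx.1.le hx.2) (Real.rpow_nonneg hx.1.le (p - 3))
    linarith
  rw [lintegral_const_mul _ (by fun_prop), lintegral_Ioc_rpow (by linarith) hs,
    ← ENNReal.ofReal_mul (by positivity)] at h1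
  refine le_trans (le_of_eq ?_) (mul_le_mul_right h1 _)
  rw [← ENNReal.ofReal_mul (by linarith), ENNReal.ofReal_rpow_of_nonneg hs (by linarith)]
  congr 1
  rw [show p - 2 + 1 = p - 1 by ring]
  have e : |s| ^ p = |s| * |s| ^ (p - 1) := by
    rcases hs.eq_or_lt with h | h
    · rw [← h, Real.zero_rpow (by linarith), zero_mul]
    · rw [mul_comm, ← Real.rpow_add_one h.ne']; congr 1; ring
  rw [e]
  have : p - 1 ≠ 0 := by linarith
  field_simp

lemma lintegral_rpow_mul_min_le {p : ℝ} (hp1 : 1 < p) (hp2 : p < 2) (r : ℝ≥0∞) :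
    ∫⁻ x in Ioi (0 : ℝ), ENNReal.ofReal (x ^ (p - 3)) * min (ENNReal.ofReal x) r ≤
      ENNReal.ofReal (1 / ((p - 1) * (2 - p))) * r ^ (p - 1) := by
  have hpos : 0 < 1 / ((p - 1) * (2 - p)) := by
    have := sub_pos.2 hp1; have := sub_pos.2 hp2; positivity
  rcases eq_or_ne r ∞ with rfl | hr
  · rw [ENNReal.top_rpow_of_pos (by linarith), ENNReal.mul_top (by simpa using hpos)]
    exact le_top
  rcases eq_or_ne r 0 with rfl | hr0
  · simp
  lift r to ℝ≥0 using hr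
  have hc : 0 < (r : ℝ) := by
    have : r ≠ 0 := by simpa using hr0
    positivity
  rw [← Ioc_union_Ioi_eq_Ioi hc.le, lintegral_union measurableSet_Ioi
    (Set.disjoint_left.2 fun x hx hx' => not_lt.2 hx.2 hx')]
  have h1 : ∫⁻ x in Ioc (0 : ℝ) r, ENNReal.ofReal (x ^ (p - 3)) * min (ENNReal.ofReal x) r ≤
      ∫⁻ x in Ioc (0 : ℝ) r, ENNReal.ofReal (x ^ (p - 2)) := by
    refine setLIntegral_mono' measurableSet_Ioc fun x hx => ?_
    refine (mul_le_mul_right (min_le_left _ _) _).trans (le_of_eq ?_)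
    rw [← ENNReal.ofReal_mul (Real.rpow_nonneg hx.1.le _), ← Real.rpow_add_one hx.1.ne']
    congr 2; ring
  have h2 : ∫⁻ x in Ioi (r : ℝ), ENNReal.ofReal (x ^ (p - 3)) * min (ENNReal.ofReal x) r ≤
      ∫⁻ x in Ioi (r : ℝ), ENNReal.ofReal (x ^ (p - 3)) * r :=
    setLIntegral_mono' measurableSet_Ioi fun x hx => mul_le_mul_right (min_le_right _ _) _
  refine (add_le_add h1 h2).trans (le_of_eq ?_)
  rw [lintegral_mul_const _ (by fun_prop), lintegral_Ioc_rpow (by linarith) hc.le,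
    lintegral_Ioi_rpow (by linarith) hc, ← ENNReal.ofReal_coe_nnreal,
    ← ENNReal.ofReal_mul (div_nonneg (by positivity) (by linarith)),
    ENNReal.ofReal_rpow_of_nonneg hc.le (by linarith), ← ENNReal.ofReal_mul hpos.le,
    ← ENNReal.ofReal_add (div_nonneg (by positivity) (by linarith))
      (mul_nonneg (div_nonneg (by positivity) (by linarith)) hc.le)]
  congr 1
  have e : (r : ℝ) ^ (p - 1) = (r : ℝ) ^ (p - 2) * r := by
    rw [← Real.rpow_add_one hc.ne']; congr 1; ring
  rw [show p - 2 + 1 = p - 1 by ring, show p - 3 + 1 = p - 2 by ring, e]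
  have h3 : p - 1 ≠ 0 := by linarith
  have h4 : 2 - p ≠ 0 := by linarith
  have h5 : -(p - 2) ≠ 0 := by linarith
  rw [show -(p-2) = 2 - p by ring]
  field_simp
  ring

lemma volume_restrict_ofReal_lt (c : ℝ≥0∞) :
    volume.restrict (Ioi (0 : ℝ)) {s : ℝ | ENNReal.ofReal s < c} = c := by
  rw [Measure.restrict_apply (measurableSet_lt ENNReal.measurable_ofReal measurable_const)]
  rcases eq_or_ne c ∞ with rfl | hc
  · have : {s : ℝ | ENNReal.ofReal s < ∞} = univ := by ext; simp
    rw [this, univ_inter, Real.volume_Ioi]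
  · have : {s : ℝ | ENNReal.ofReal s < c} ∩ Ioi 0 = Ioo 0 c.toReal := by
      ext s
      simp only [mem_inter_iff, mem_ofPred_eq, mem_Ioi, mem_Ioo]
      constructor
      · rintro ⟨h1, h2⟩
        exact ⟨h2, (ENNReal.ofReal_lt_iff_lt_toReal h2.le hc).1 h1⟩
      · rintro ⟨h1, h2⟩
        exact ⟨(ENNReal.ofReal_lt_iff_lt_toReal h1.le hc).2 h2, h1⟩
    rw [this, Real.volume_Ioo, sub_zero, ENNReal.ofReal_toReal hc]

/-- A two-dimensional layer cake formula. -/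
lemma lintegral_mul_eq_lintegral_prod_meas {X : Type*} [MeasurableSpace X] (μ : Measure X)
    [SFinite μ] {f g : X → ℝ≥0∞} (hf : Measurable f) (hg : Measurable g) :
    ∫⁻ ω, f ω * g ω ∂μ =
      ∫⁻ z : ℝ × ℝ, μ ({ω | ENNReal.ofReal z.1 < f ω} ∩ {ω | ENNReal.ofReal z.2 < g ω})
        ∂((volume.restrict (Ioi 0)).prod (volume.restrict (Ioi 0))) := by
  set ν : Measure ℝ := volume.restrict (Ioi 0) with hν
  have hE : MeasurableSet ({y : X × (ℝ × ℝ) | ENNReal.ofReal y.2.1 < f y.1} ∩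
      {y : X × (ℝ × ℝ) | ENNReal.ofReal y.2.2 < g y.1}) :=
    (measurableSet_lt (by fun_prop) (by fun_prop)).inter
      (measurableSet_lt (by fun_prop) (by fun_prop))
  have h1 := Measure.prod_apply (μ := μ) (ν := ν.prod ν) hE
  have h2 := Measure.prod_apply_symm (μ := μ) (ν := ν.prod ν) hE
  rw [h1] at h2
  refine Eq.trans (lintegral_congr fun ω => ?_) h2
  have : Prod.mk ω ⁻¹' ({y : X × (ℝ × ℝ) | ENNReal.ofReal y.2.1 < f y.1} ∩
      {y : X × (ℝ × ℝ) | ENNReal.ofReal y.2.2 < g y.1}) =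
      {s : ℝ | ENNReal.ofReal s < f ω} ×ˢ {s : ℝ | ENNReal.ofReal s < g ω} := rfl
  rw [this, Measure.prod_prod, hν, volume_restrict_ofReal_lt, volume_restrict_ofReal_lt]

/-- Covariance inequality for nonnegative variables: the functions `F` and `G` dominate the
quantile functions of `f` and `g`, and `a` bounds the dependence between their level sets. -/
lemma lintegral_mul_covariance_le {Ω : Type*} [MeasurableSpace Ω] (P : Measure Ω)
    [IsProbabilityMeasure P] {f g : Ω → ℝ≥0∞} (hf : Measurable f) (hg : Measurable g)
    {F G : ℝ → ℝ≥0∞} (hFm : Measurable F) (hGm : Measurable G)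
    (hF : ∀ u : ℝ, 0 < u → P {ω | F u < f ω} ≤ ENNReal.ofReal u)
    (hG : ∀ u : ℝ, 0 < u → P {ω | G u < g ω} ≤ ENNReal.ofReal u) {a : ℝ}
    (ha : ∀ s t : ℝ≥0∞, |P.real {ω | s < f ω} * P.real {ω | t < g ω} -
      P.real ({ω | s < f ω} ∩ {ω | t < g ω})| ≤ a) :
    ∫⁻ ω, f ω * g ω ∂P ≤ (∫⁻ ω, f ω ∂P) * (∫⁻ ω, g ω ∂P) + ∫⁻ u in Ioo 0 a, F u * G u ∧
    (∫⁻ ω, f ω ∂P) * (∫⁻ ω, g ω ∂P) ≤ ∫⁻ ω, f ω * g ω ∂P + ∫⁻ u in Ioo 0 a, F u * G u := by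
  have hprod : (∫⁻ ω, f ω ∂P) * (∫⁻ ω, g ω ∂P) =
      ∫⁻ z : ℝ × ℝ, P {ω | ENNReal.ofReal z.1 < f ω} * P {ω | ENNReal.ofReal z.2 < g ω}
        ∂((volume.restrict (Ioi 0)).prod (volume.restrict (Ioi 0))) := by
    rw [← lintegral_prod_mul hf.aemeasurable hg.aemeasurable]
    refine (lintegral_mul_eq_lintegral_prod_meas (P.prod P) (hf.comp measurable_fst)
      (hg.comp measurable_snd)).trans ?_
    refine lintegral_congr fun z => ?_
    rw [← Measure.prod_prod]
    rfl
  have hmf : ∀ s, MeasurableSet {ω | s < f ω} := fun s => measurableSet_lt measurable_const hf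
  have hmg : ∀ s, MeasurableSet {ω | s < g ω} := fun s => measurableSet_lt measurable_const hg
  have hV : ∀ s t : ℝ≥0∞, ENNReal.ofReal (min a (min (P.real {ω | s < f ω})
      (P.real {ω | t < g ω}))) ≤
      volume.restrict (Ioo 0 a) ({u | s < F u} ∩ {u | t < G u}) := by
    intro s t
    rw [← sub_zero (min a _), ← Real.volume_Ioo, Measure.restrict_apply
      ((measurableSet_lt measurable_const hFm).inter (measurableSet_lt measurable_const hGm))]
    refine measure_mono fun u hu => ?_
    have h0 : 0 < u := hu.1
    have h1 := lt_min_iff.1 hu.2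
    have h2 := lt_min_iff.1 h1.2
    refine ⟨⟨?_, ?_⟩, h0, h1.1⟩
    · by_contra hcon
      have hcon : F u ≤ s := not_lt.1 hcon
      refine not_le.2 h2.1 (ENNReal.toReal_le_of_le_ofReal h0.le ?_)
      exact (measure_mono fun ω (hω : s < f ω) => hcon.trans_lt hω).trans (hF u h0)
    · by_contra hcon
      have hcon : G u ≤ t := not_lt.1 hcon
      refine not_le.2 h2.2 (ENNReal.toReal_le_of_le_ofReal h0.le ?_)
      exact (measure_mono fun ω (hω : t < g ω) => hcon.trans_lt hω).trans (hG u h0)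
  have hm1 : Measurable fun z : ℝ × ℝ =>
      P {ω | ENNReal.ofReal z.1 < f ω} * P {ω | ENNReal.ofReal z.2 < g ω} := by
    refine Measurable.mul ?_ ?_
    · exact measurable_measure_prodMk_left (ν := P)
        (s := {y : (ℝ × ℝ) × Ω | ENNReal.ofReal y.1.1 < f y.2})
        (measurableSet_lt (by fun_prop) (by fun_prop))
    · exact measurable_measure_prodMk_left (ν := P)
        (s := {y : (ℝ × ℝ) × Ω | ENNReal.ofReal y.1.2 < g y.2})
        (measurableSet_lt (by fun_prop) (by fun_prop))
  have hm2 : Measurable fun z : ℝ × ℝ =>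
      P ({ω | ENNReal.ofReal z.1 < f ω} ∩ {ω | ENNReal.ofReal z.2 < g ω}) :=
    measurable_measure_prodMk_left (ν := P)
      (s := {y : (ℝ × ℝ) × Ω | ENNReal.ofReal y.1.1 < f y.2} ∩
        {y : (ℝ × ℝ) × Ω | ENNReal.ofReal y.1.2 < g y.2})
      ((measurableSet_lt (by fun_prop) (by fun_prop)).inter
        (measurableSet_lt (by fun_prop) (by fun_prop)))
  rw [hprod, lintegral_mul_eq_lintegral_prod_meas P hf hg,
    lintegral_mul_eq_lintegral_prod_meas _ hFm hGm, ← lintegral_add_left hm1,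
    ← lintegral_add_left hm2]
  refine ⟨lintegral_mono fun z => ?_, lintegral_mono fun z => ?_⟩
  all_goals
    refine le_trans ?_ (add_le_add_right (hV _ _) _)
    set A := {ω | ENNReal.ofReal z.1 < f ω}
    set B := {ω | ENNReal.ofReal z.2 < g ω}
    have hA : P A = ENNReal.ofReal (P.real A) := (ofReal_measureReal).symm
    have hB : P B = ENNReal.ofReal (P.real B) := (ofReal_measureReal).symm
    have hAB : P (A ∩ B) = ENNReal.ofReal (P.real (A ∩ B)) := (ofReal_measureReal).symm
    have e1 : P.real (A ∩ B) ≤ P.real A := measureReal_mono inter_subset_left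
    have e2 : P.real (A ∩ B) ≤ P.real B := measureReal_mono inter_subset_right
    have e3 : P.real A ≤ 1 := measureReal_le_one
    have e4 : P.real B ≤ 1 := measureReal_le_one
    have e5 : 0 ≤ P.real A := measureReal_nonneg
    have e6 : 0 ≤ P.real B := measureReal_nonneg
    have e7 : 0 ≤ P.real (A ∩ B) := measureReal_nonneg
    have e8 := abs_le.1 (ha (ENNReal.ofReal z.1) (ENNReal.ofReal z.2))
    have e9 : 0 ≤ a := (abs_nonneg _).trans (ha (ENNReal.ofReal z.1) (ENNReal.ofReal z.2))
    rw [hA, hB, hAB, ← ENNReal.ofReal_mul e5, ← ENNReal.ofReal_add (by positivity) (by positivity)]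
    refine ENNReal.ofReal_le_ofReal ?_
    rw [← sub_le_iff_le_add', le_min_iff, le_min_iff]
    refine ⟨by linarith [e8.1, e8.2], ?_, ?_⟩ <;> nlinarith

/-- The quantile function of `f`, as a function of the upper tail probability. -/
noncomputable def tailQuantile {Ω : Type*} [MeasurableSpace Ω] (P : Measure Ω) (f : Ω → ℝ≥0∞)
    (u : ℝ) : ℝ≥0∞ :=
  sInf {t | P {ω | t < f ω} ≤ ENNReal.ofReal u}

section TailQuantile

variable {Ω : Type*} [MeasurableSpace Ω] (P : Measure Ω) (f : Ω → ℝ≥0∞)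

lemma antitone_tailQuantile : Antitone (tailQuantile P f) := fun _ _ huv =>
  sInf_le_sInf fun _ ht => le_trans ht (ENNReal.ofReal_le_ofReal huv)

lemma measure_tailQuantile_lt_le (u : ℝ) :
    P {ω | tailQuantile P f u < f ω} ≤ ENNReal.ofReal u := by
  have hne : {t | P {ω | t < f ω} ≤ ENNReal.ofReal u}.Nonempty := ⟨∞, by simp⟩
  obtain ⟨v, hv, hlim, hmem⟩ := exists_seq_tendsto_sInf hne (OrderBot.bddBelow _)
  have hsub : {ω | tailQuantile P f u < f ω} ⊆ ⋃ n, {ω | v n < f ω} := fun ω hω => by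
    obtain ⟨n, hn⟩ := (hlim.eventually (gt_mem_nhds hω)).exists
    exact mem_iUnion.2 ⟨n, hn⟩
  refine (measure_mono hsub).trans ?_
  have hmono : Monotone fun n => {ω | v n < f ω} := fun m n hmn ω hω => (hv hmn).trans_lt hω
  rw [hmono.measure_iUnion]
  exact iSup_le hmem

lemma tailQuantile_le_iff (u : ℝ) (t : ℝ≥0∞) :
    tailQuantile P f u ≤ t ↔ P {ω | t < f ω} ≤ ENNReal.ofReal u :=
  ⟨fun h => (measure_mono fun _ hω => h.trans_lt hω).trans (measure_tailQuantile_lt_le P f u),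
    fun h => sInf_le h⟩

variable {f}

/-- Under the uniform distribution on `(0, 1]` the quantile function has the same law as `f`. -/
lemma lintegral_comp_eq_lintegral_tailQuantile [IsProbabilityMeasure P] (hf : Measurable f)
    {φ : ℝ≥0∞ → ℝ≥0∞} (hφ : Measurable φ) :
    ∫⁻ ω, φ (f ω) ∂P = ∫⁻ u in Ioc (0 : ℝ) 1, φ (tailQuantile P f u) := by
  have hQ := (antitone_tailQuantile P f).measurable
  rw [← lintegral_map hφ hf, ← lintegral_map hφ hQ]
  congr 1
  have : IsProbabilityMeasure (P.map f) := Measure.isProbabilityMeasure_map hf.aemeasurable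
  refine Measure.ext_of_Iic _ _ fun t => ?_
  rw [Measure.map_apply hf measurableSet_Iic, Measure.map_apply hQ measurableSet_Iic,
    Measure.restrict_apply (hQ measurableSet_Iic)]
  have hc : f ⁻¹' Iic t = {ω | t < f ω}ᶜ := by ext; simp
  rw [hc, prob_compl_eq_one_sub (measurableSet_lt measurable_const hf)]
  set c := P.real {ω | t < f ω}
  have hP : P {ω | t < f ω} = ENNReal.ofReal c := (ofReal_measureReal).symm
  have hmem : ∀ u : ℝ, 0 < u → (u ∈ tailQuantile P f ⁻¹' Iic t ↔ c ≤ u) := fun u hu => by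
    rw [mem_preimage, mem_Iic, tailQuantile_le_iff, hP, ENNReal.ofReal_le_ofReal_iff hu.le]
  have hc0 : 0 ≤ c := measureReal_nonneg
  have hc1 : c ≤ 1 := measureReal_le_one
  have hle : volume (Ioc c 1) ≤ volume (tailQuantile P f ⁻¹' Iic t ∩ Ioc 0 1) :=
    measure_mono fun u hu =>
      ⟨(hmem u (hc0.trans_lt hu.1)).2 hu.1.le, hc0.trans_lt hu.1, hu.2⟩
  have hge : volume (tailQuantile P f ⁻¹' Iic t ∩ Ioc 0 1) ≤ volume (Icc c 1) :=
    measure_mono fun u hu => ⟨(hmem u hu.2.1).1 hu.1, hu.2.2⟩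
  rw [Real.volume_Ioc] at hle
  rw [Real.volume_Icc] at hge
  rw [hP, ← ENNReal.ofReal_one, ← ENNReal.ofReal_sub _ hc0]
  exact le_antisymm hle hge

end TailQuantile

lemma ofReal_abs_sub_le {a b : ℝ} (hb : 0 ≤ b) (ha : 0 ≤ a) {D : ℝ≥0∞}
    (h1 : ENNReal.ofReal a ≤ ENNReal.ofReal b + D)
    (h2 : ENNReal.ofReal b ≤ ENNReal.ofReal a + D) : ENNReal.ofReal |a - b| ≤ D := by
  rcases abs_cases (a - b) with ⟨h, _⟩ | ⟨h, _⟩ <;> rw [h]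
  · rw [ENNReal.ofReal_sub _ hb]; exact tsub_le_iff_left.2 h1
  · rw [neg_sub, ENNReal.ofReal_sub _ ha]; exact tsub_le_iff_left.2 h2

lemma memLp_of_abs_le {Ω : Type*} [MeasurableSpace Ω] {P : Measure Ω} [IsProbabilityMeasure P]
    {X : Ω → ℝ} (hX : Measurable X) {b : ℝ} (hb : ∀ ω, |X ω| ≤ b) (r : ℝ≥0∞) : MemLp X r P :=
  MemLp.of_bound hX.aestronglyMeasurable b (.of_forall hb)

section Covariance

variable {Ω : Type*} [MeasurableSpace Ω] (P : Measure Ω) [IsProbabilityMeasure P]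
  {X Z : Ω → ℝ} {F G : ℝ → ℝ≥0∞} {a : ℝ}

lemma ofReal_abs_covariance_comp_le (hX : Measurable X) (hZ : Measurable Z)
    (hFm : Measurable F) (hGm : Measurable G)
    (hF : ∀ u : ℝ, 0 < u → P {ω | F u < ‖X ω‖ₑ} ≤ ENNReal.ofReal u)
    (hG : ∀ u : ℝ, 0 < u → P {ω | G u < ‖Z ω‖ₑ} ≤ ENNReal.ofReal u)
    (ha : ∀ S T : Set ℝ, MeasurableSet S → MeasurableSet T →
      |P.real (X ⁻¹' S) * P.real (Z ⁻¹' T) - P.real (X ⁻¹' S ∩ Z ⁻¹' T)| ≤ a)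
    {b c : ℝ} (hXb : ∀ ω, |X ω| ≤ b) (hZc : ∀ ω, |Z ω| ≤ c) {φ ψ : ℝ → ℝ}
    (hφ : Measurable φ) (hψ : Measurable ψ) (hφ0 : ∀ s, 0 ≤ φ s) (hψ0 : ∀ s, 0 ≤ ψ s)
    (hφ1 : ∀ s, φ s ≤ |s|) (hψ1 : ∀ s, ψ s ≤ |s|) :
    ENNReal.ofReal |cov[φ ∘ X, ψ ∘ Z; P]| ≤ ∫⁻ u in Ioo 0 a, F u * G u := by
  have hX2 : ∀ r, MemLp (φ ∘ X) r P := memLp_of_abs_le (hφ.comp hX) (b := b) fun ω => by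
    simpa [abs_of_nonneg (hφ0 _)] using (hφ1 _).trans (hXb ω)
  have hZ2 : ∀ r, MemLp (ψ ∘ Z) r P := memLp_of_abs_le (hψ.comp hZ) (b := c) fun ω => by
    simpa [abs_of_nonneg (hψ0 _)] using (hψ1 _).trans (hZc ω)
  have hXZ : Integrable (φ ∘ X * ψ ∘ Z) P := (hX2 2).integrable_mul (hZ2 2)
  have key := lintegral_mul_covariance_le P (f := fun ω => ENNReal.ofReal (φ (X ω)))
    (g := fun ω => ENNReal.ofReal (ψ (Z ω))) (by fun_prop) (by fun_prop) hFm hGm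
    (fun u hu => (measure_mono fun ω (hω : F u < _) => hω.trans_le (by
      rw [Real.enorm_eq_ofReal_abs]; exact ENNReal.ofReal_le_ofReal (hφ1 _))).trans (hF u hu))
    (fun u hu => (measure_mono fun ω (hω : G u < _) => hω.trans_le (by
      rw [Real.enorm_eq_ofReal_abs]; exact ENNReal.ofReal_le_ofReal (hψ1 _))).trans (hG u hu))
    (a := a) (fun s t => ha {y | s < ENNReal.ofReal (φ y)} {y | t < ENNReal.ofReal (ψ y)}
      (measurableSet_lt measurable_const (by fun_prop))
      (measurableSet_lt measurable_const (by fun_prop)))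
  have e1 : ∫⁻ ω, ENNReal.ofReal (φ (X ω)) ∂P = ENNReal.ofReal (∫ ω, (φ ∘ X) ω ∂P) :=
    (ofReal_integral_eq_lintegral_ofReal ((hX2 1).integrable le_rfl)
      (.of_forall fun ω => hφ0 _)).symm
  have e2 : ∫⁻ ω, ENNReal.ofReal (ψ (Z ω)) ∂P = ENNReal.ofReal (∫ ω, (ψ ∘ Z) ω ∂P) :=
    (ofReal_integral_eq_lintegral_ofReal ((hZ2 1).integrable le_rfl)
      (.of_forall fun ω => hψ0 _)).symm
  have e3 : ∫⁻ ω, ENNReal.ofReal (φ (X ω)) * ENNReal.ofReal (ψ (Z ω)) ∂P =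
      ENNReal.ofReal (∫ ω, (φ ∘ X * ψ ∘ Z) ω ∂P) := by
    rw [ofReal_integral_eq_lintegral_ofReal hXZ
      (.of_forall fun ω => mul_nonneg (hφ0 _) (hψ0 _))]
    exact lintegral_congr fun ω => (ENNReal.ofReal_mul (hφ0 _)).symm
  have e4 : 0 ≤ ∫ ω, (φ ∘ X) ω ∂P := integral_nonneg fun ω => hφ0 _
  have e5 : 0 ≤ ∫ ω, (ψ ∘ Z) ω ∂P := integral_nonneg fun ω => hψ0 _
  have e6 : 0 ≤ ∫ ω, (φ ∘ X * ψ ∘ Z) ω ∂P :=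
    integral_nonneg fun ω => mul_nonneg (hφ0 _) (hψ0 _)
  rw [e1, e2, e3, ← ENNReal.ofReal_mul e4] at key
  rw [covariance_eq_sub (hX2 2) (hZ2 2)]
  exact ofReal_abs_sub_le (mul_nonneg e4 e5) e6 key.1 key.2

/-- Rio's covariance inequality: the covariance of two bounded variables is controlled by the
integral of the product of their quantile functions up to the level of dependence. -/
lemma ofReal_abs_covariance_le (hX : Measurable X) (hZ : Measurable Z)
    (hFm : Measurable F) (hGm : Measurable G)
    (hF : ∀ u : ℝ, 0 < u → P {ω | F u < ‖X ω‖ₑ} ≤ ENNReal.ofReal u)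
    (hG : ∀ u : ℝ, 0 < u → P {ω | G u < ‖Z ω‖ₑ} ≤ ENNReal.ofReal u)
    (ha : ∀ S T : Set ℝ, MeasurableSet S → MeasurableSet T →
      |P.real (X ⁻¹' S) * P.real (Z ⁻¹' T) - P.real (X ⁻¹' S ∩ Z ⁻¹' T)| ≤ a)
    {b c : ℝ} (hXb : ∀ ω, |X ω| ≤ b) (hZc : ∀ ω, |Z ω| ≤ c) :
    ENNReal.ofReal |cov[X, Z; P]| ≤ 4 * ∫⁻ u in Ioo 0 a, F u * G u := by
  set pos : ℝ → ℝ := fun s => max s 0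
  set neg : ℝ → ℝ := fun s => max (-s) 0
  have hpm : Measurable pos := by fun_prop
  have hnm : Measurable neg := by fun_prop
  have hp0 : ∀ s, 0 ≤ pos s := fun s => le_max_right _ _
  have hn0 : ∀ s, 0 ≤ neg s := fun s => le_max_right _ _
  have hp1 : ∀ s, pos s ≤ |s| := fun s => max_le (le_abs_self s) (abs_nonneg s)
  have hn1 : ∀ s, neg s ≤ |s| := fun s => max_le (neg_le_abs s) (abs_nonneg s)
  have hdec : ∀ U : Ω → ℝ, U = pos ∘ U - neg ∘ U := fun U => by
    funext ω
    simp only [pos, neg, Pi.sub_apply, Function.comp]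
    rcases le_total (U ω) 0 with h | h
    · rw [max_eq_right h, max_eq_left (by linarith)]; ring
    · rw [max_eq_left h, max_eq_right (by linarith)]; ring
  have hL : ∀ {φ : ℝ → ℝ} {U : Ω → ℝ} {d : ℝ}, Measurable φ → (∀ s, 0 ≤ φ s) →
      (∀ s, φ s ≤ |s|) → Measurable U → (∀ ω, |U ω| ≤ d) → MemLp (φ ∘ U) 2 P := by
    intro φ U d h1 h2 h3 hU hd
    refine memLp_of_abs_le (h1.comp hU) (b := d) (fun ω => ?_) 2
    simpa [abs_of_nonneg (h2 _)] using (h3 _).trans (hd ω)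
  have hpX := hL hpm hp0 hp1 hX hXb
  have hnX := hL hnm hn0 hn1 hX hXb
  have hpZ := hL hpm hp0 hp1 hZ hZc
  have hnZ := hL hnm hn0 hn1 hZ hZc
  have hcov : cov[X, Z; P] = cov[pos ∘ X, pos ∘ Z; P] - cov[pos ∘ X, neg ∘ Z; P] -
      (cov[neg ∘ X, pos ∘ Z; P] - cov[neg ∘ X, neg ∘ Z; P]) := by
    conv_lhs => rw [hdec X, hdec Z]
    rw [covariance_sub_left hpX hnX (hpZ.sub hnZ), covariance_sub_right hpX hpZ hnZ,
      covariance_sub_right hnX hpZ hnZ]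
  have b1 := ofReal_abs_covariance_comp_le P hX hZ hFm hGm hF hG ha hXb hZc hpm hpm hp0 hp0 hp1 hp1
  have b2 := ofReal_abs_covariance_comp_le P hX hZ hFm hGm hF hG ha hXb hZc hpm hnm hp0 hn0 hp1 hn1
  have b3 := ofReal_abs_covariance_comp_le P hX hZ hFm hGm hF hG ha hXb hZc hnm hpm hn0 hp0 hn1 hp1
  have b4 := ofReal_abs_covariance_comp_le P hX hZ hFm hGm hF hG ha hXb hZc hnm hnm hn0 hn0 hn1 hn1
  have habs : |cov[X, Z; P]| ≤ |cov[pos ∘ X, pos ∘ Z; P]| + |cov[pos ∘ X, neg ∘ Z; P]| +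
      (|cov[neg ∘ X, pos ∘ Z; P]| + |cov[neg ∘ X, neg ∘ Z; P]|) := by
    rw [hcov]
    exact (abs_sub _ _).trans (add_le_add (abs_sub _ _) (abs_sub _ _))
  calc ENNReal.ofReal |cov[X, Z; P]| ≤ _ := ENNReal.ofReal_le_ofReal habs
    _ = ENNReal.ofReal |cov[pos ∘ X, pos ∘ Z; P]| + ENNReal.ofReal |cov[pos ∘ X, neg ∘ Z; P]| +
      (ENNReal.ofReal |cov[neg ∘ X, pos ∘ Z; P]| +
        ENNReal.ofReal |cov[neg ∘ X, neg ∘ Z; P]|) := by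
      rw [ENNReal.ofReal_add (by positivity) (by positivity),
        ENNReal.ofReal_add (by positivity) (by positivity),
        ENNReal.ofReal_add (by positivity) (by positivity)]
    _ ≤ _ := add_le_add (add_le_add b1 b2) (add_le_add b3 b4)
    _ = _ := by ring

end Covariance

/-- The partial sums `∑_{j=1}^n Y_j`, each term being truncated at level `M`. -/
noncomputable def clipSum {Ω : Type*} (Y : ℕ → Ω → ℝ) (M : ℝ) (n : ℕ) (ω : Ω) : ℝ :=
  ∑ j ∈ Finset.range n, clip M (Y (j + 1) ω)

section ClipSum

variable {Ω : Type*} {Y : ℕ → Ω → ℝ} {M x : ℝ}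

lemma clipSum_zero : clipSum Y M 0 = 0 := by funext ω; simp [clipSum]

lemma clipSum_succ (n : ℕ) (ω : Ω) :
    clipSum Y M (n + 1) ω = clipSum Y M n ω + clip M (Y (n + 1) ω) := by
  simp [clipSum, Finset.sum_range_succ]

lemma measurable_clip_comp_comap (n : ℕ) :
    Measurable[MeasurableSpace.comap (Y n) inferInstance] fun ω => clip M (Y n ω) :=
  (measurable_clip M).comp (comap_measurable (Y n))

lemma measurable_clipSum_past (n : ℕ) :
    Measurable[⨆ k ∈ Iic n, MeasurableSpace.comap (Y k) inferInstance] (clipSum Y M n) := by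
  refine @Finset.measurable_fun_sum ℝ ℕ Ω _ _ _ (_) _ _ fun j hj => ?_
  have hj' : j + 1 ∈ Iic n := Finset.mem_range.1 hj
  exact (measurable_clip_comp_comap (j + 1)).mono
    (le_iSup₂ (f := fun (k : ℕ) (_ : k ∈ Iic n) =>
      MeasurableSpace.comap (Y k) (inferInstance : MeasurableSpace ℝ)) (j + 1) hj') le_rfl

variable [MeasurableSpace Ω] {P : Measure Ω} [IsProbabilityMeasure P]

lemma measurable_clipSum (hY : ∀ i, Measurable (Y i)) (n : ℕ) : Measurable (clipSum Y M n) :=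
  Finset.measurable_fun_sum _ fun j _ => (measurable_clip M).comp (hY (j + 1))

/-- The covariance of the next term of a truncated sum with the clipped past of that sum. -/
lemma ofReal_abs_covariance_clip_clipSum_le (hY : ∀ i, Measurable (Y i)) {α : ℕ → ℝ}
    (hmix : ∀ i m, 1 ≤ m → ∀ A B : Set Ω,
      MeasurableSet[⨆ k ∈ Iic i, MeasurableSpace.comap (Y k) inferInstance] A →
      MeasurableSet[⨆ j ∈ Ici (i + m), MeasurableSpace.comap (Y j) inferInstance] B →
      |P.real A * P.real B - P.real (A ∩ B)| ≤ α m)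
    (hM : 0 ≤ M) (hx : 0 ≤ x) {F : ℝ → ℝ≥0∞} (hFm : Measurable F)
    (hF : ∀ j, ∀ u : ℝ, 0 < u → P {ω | F u < ‖clip M (Y j ω)‖ₑ} ≤ ENNReal.ofReal u)
    (n : ℕ) {q : ℕ} (hq : 1 ≤ q) :
    ENNReal.ofReal |cov[fun ω => clip x (clipSum Y M n ω),
        fun ω => clip M (Y (n + 1) ω); P]| ≤
      ∑ k ∈ Finset.Ico 1 q, 4 * (∫⁻ u in Ioo 0 (α k), F u * F u) +
        4 * ∫⁻ u in Ioo 0 (α q), ENNReal.ofReal x * F u := by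
  have hh : ∀ m, Measurable fun ω => clip x (clipSum Y M m ω) := fun m =>
    (measurable_clip x).comp (measurable_clipSum hY m)
  have hhp : ∀ m, Measurable[⨆ k ∈ Iic m, MeasurableSpace.comap (Y k) inferInstance]
      fun ω => clip x (clipSum Y M m ω) := fun m =>
    (measurable_clip x).comp (measurable_clipSum_past m)
  have hW : Measurable fun ω => clip M (Y (n + 1) ω) := (measurable_clip M).comp (hY _)
  have hWb : ∀ ω, |clip M (Y (n + 1) ω)| ≤ M := fun ω => abs_clip_le hM _
  have hWf : ∀ i m, i + m = n + 1 →
      Measurable[⨆ j ∈ Ici (i + m), MeasurableSpace.comap (Y j) inferInstance]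
      fun ω => clip M (Y (n + 1) ω) := fun i m him =>
    (measurable_clip_comp_comap (n + 1)).mono
      (le_iSup₂ (f := fun (k : ℕ) (_ : k ∈ Ici (i + m)) =>
        MeasurableSpace.comap (Y k) (inferInstance : MeasurableSpace ℝ)) (n + 1)
        (le_of_eq him)) le_rfl
  have hL : ∀ m, MemLp (fun ω => clip x (clipSum Y M m ω)) 2 P := fun m =>
    memLp_of_abs_le (hh m) (fun ω => abs_clip_le hx _) 2
  have hWL : MemLp (fun ω => clip M (Y (n + 1) ω)) 2 P := memLp_of_abs_le hW hWb 2
  have hzero : cov[fun ω => clip x (clipSum Y M 0 ω), fun ω => clip M (Y (n + 1) ω); P] = 0 := by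
    simp only [clipSum_zero, Pi.zero_apply, clip_zero hx]
    exact covariance_const_left 0
  have hstep : ENNReal.ofReal |cov[fun ω => clip x (clipSum Y M n ω),
        fun ω => clip M (Y (n + 1) ω); P]| ≤
      ∑ k ∈ Finset.Ico 1 q, 4 * (∫⁻ u in Ioo 0 (α k), F u * F u) +
        ENNReal.ofReal |cov[fun ω => clip x (clipSum Y M (n + 1 - q) ω),
          fun ω => clip M (Y (n + 1) ω); P]| := by
    induction q, hq using Nat.le_induction with
    | base => simp
    | succ q hq ih =>
      refine ih.trans ?_
      rw [Finset.sum_Ico_succ_top hq, add_assoc]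
      gcongr
      rcases Nat.lt_or_ge n q with hnq | hnq
      · rw [show n + 1 - q = 0 by omega, hzero]; simp
      obtain ⟨m, rfl⟩ : ∃ m, n = m + q := ⟨n - q, by omega⟩
      rw [show m + q + 1 - q = m + 1 by omega, show m + q + 1 - (q + 1) = m by omega]
      have hinc : ∀ ω, |clip x (clipSum Y M (m + 1) ω) - clip x (clipSum Y M m ω)| ≤
          |clip M (Y (m + 1) ω)| := fun ω => by
        rw [clipSum_succ]; exact abs_clip_add_sub_clip_le hx _ _
      have hsub : ∀ S, MeasurableSet S →
          MeasurableSet[⨆ k ∈ Iic (m + 1), MeasurableSpace.comap (Y k) inferInstance]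
          ((fun ω => clip x (clipSum Y M (m + 1) ω) - clip x (clipSum Y M m ω)) ⁻¹' S) := by
        intro S hS
        refine @Measurable.sub ℝ Ω _ _ _ (_) _ _ (hhp (m + 1)) ((hhp m).mono ?_ le_rfl) S hS
        exact biSup_mono fun k (hk : k ≤ m) => Nat.le_succ_of_le hk
      have hcov := ofReal_abs_covariance_le P
        (X := fun ω => clip x (clipSum Y M (m + 1) ω) - clip x (clipSum Y M m ω))
        (Z := fun ω => clip M (Y (m + q + 1) ω)) ((hh _).sub (hh _)) hW hFm hFm
        (fun u hu => (measure_mono fun ω (hω : F u < _) => hω.trans_le (by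
          rw [Real.enorm_eq_ofReal_abs, Real.enorm_eq_ofReal_abs]
          exact ENNReal.ofReal_le_ofReal (hinc ω))).trans (hF (m + 1) u hu))
        (hF (m + q + 1)) (a := α q)
        (fun S T hS hT => hmix (m + 1) q hq _ _ (hsub S hS) (hWf _ _ (by omega) hT))
        (fun ω => (hinc ω).trans (abs_clip_le hM _)) hWb
      rw [covariance_fun_sub_left (hL _) (hL _) hWL] at hcov
      refine le_trans ?_ (add_le_add_left hcov _)
      rw [← ENNReal.ofReal_add (abs_nonneg _) (abs_nonneg _)]
      refine ENNReal.ofReal_le_ofReal ?_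
      refine le_trans (le_of_eq ?_) (abs_add_le _ _)
      rw [sub_add_cancel]
  refine hstep.trans ?_
  gcongr
  rcases Nat.lt_or_ge n q with hnq | hnq
  · rw [show n + 1 - q = 0 by omega, hzero]; simp
  refine ofReal_abs_covariance_le P (hh _) hW measurable_const hFm (fun u _ => ?_) (hF _)
    (fun S T hS hT => hmix (n + 1 - q) q hq _ _ (hhp _ hS) (hWf _ _ (by omega) hT))
    (fun ω => abs_clip_le hx _) hWb
  have : {ω | ENNReal.ofReal x < ‖clip x (clipSum Y M (n + 1 - q) ω)‖ₑ} = ∅ := by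
    ext ω
    simp only [mem_ofPred_eq, mem_empty_iff_false, iff_false, not_lt, Real.enorm_eq_ofReal_abs]
    exact ENNReal.ofReal_le_ofReal (abs_clip_le hx _)
  rw [this]; simp

lemma ofReal_integral_huber_clipSum_le (hY : ∀ i, Measurable (Y i)) {α : ℕ → ℝ}
    (hmix : ∀ i m, 1 ≤ m → ∀ A B : Set Ω,
      MeasurableSet[⨆ k ∈ Iic i, MeasurableSpace.comap (Y k) inferInstance] A →
      MeasurableSet[⨆ j ∈ Ici (i + m), MeasurableSpace.comap (Y j) inferInstance] B →
      |P.real A * P.real B - P.real (A ∩ B)| ≤ α m)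
    (hM : 0 ≤ M) (hx : 0 ≤ x) {F : ℝ → ℝ≥0∞} (hFm : Measurable F)
    (hF : ∀ j, ∀ u : ℝ, 0 < u → P {ω | F u < ‖clip M (Y j ω)‖ₑ} ≤ ENNReal.ofReal u)
    {τ β : ℝ≥0∞} (hτ : ∀ j, 1 ≤ j → ENNReal.ofReal |∫ ω, clip M (Y j ω) ∂P| ≤ τ)
    (hβ : ∀ j, 1 ≤ j → ENNReal.ofReal (∫ ω, |clip M (Y j ω)| * min x |clip M (Y j ω)| ∂P) ≤ β)
    {q : ℕ} (hq : 1 ≤ q) (n : ℕ) :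
    ENNReal.ofReal (∫ ω, huber x (clipSum Y M n ω) ∂P) ≤
      n * (2 * β + ENNReal.ofReal x * τ +
        (∑ k ∈ Finset.Ico 1 q, 4 * (∫⁻ u in Ioo 0 (α k), F u * F u) +
          4 * ∫⁻ u in Ioo 0 (α q), ENNReal.ofReal x * F u)) := by
  have hTb : ∀ n ω, |clipSum Y M n ω| ≤ n * M := fun n ω => by
    refine (Finset.abs_sum_le_sum_abs _ _).trans ((Finset.sum_le_sum
      fun j _ => abs_clip_le hM (Y (j + 1) ω)).trans (le_of_eq ?_))
    simp
  have hHi : ∀ n, Integrable (fun ω => huber x (clipSum Y M n ω)) P := fun n =>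
    (memLp_of_abs_le ((measurable_huber x).comp (measurable_clipSum hY n)) (b := x * (n * M))
      (fun ω => by
        simp only [Function.comp]
        rw [abs_of_nonneg (huber_nonneg hx _)]
        exact (huber_le hx _).trans (mul_le_mul_of_nonneg_left (hTb n ω) hx)) 1).integrable le_rfl
  induction n with
  | zero => simp [clipSum_zero, huber_zero x hx]
  | succ n ih =>
    have hW : Measurable fun ω => clip M (Y (n + 1) ω) := (measurable_clip M).comp (hY _)
    have hWb : ∀ ω, |clip M (Y (n + 1) ω)| ≤ M := fun ω => abs_clip_le hM _
    have hWL : ∀ r, MemLp (fun ω => clip M (Y (n + 1) ω)) r P := memLp_of_abs_le hW hWb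
    have hL : ∀ r, MemLp (fun ω => clip x (clipSum Y M n ω)) r P :=
      memLp_of_abs_le ((measurable_clip x).comp (measurable_clipSum hY n))
        (fun ω => abs_clip_le hx _)
    have hi2 : Integrable (fun ω => clip x (clipSum Y M n ω) * clip M (Y (n + 1) ω)) P :=
      (hL 2).integrable_mul (hWL 2)
    have hi3 : Integrable (fun ω => |clip M (Y (n + 1) ω)| * min x |clip M (Y (n + 1) ω)|) P :=
      (memLp_of_abs_le (by fun_prop) (b := M * M) (fun ω => by
        rw [abs_mul, abs_abs, abs_of_nonneg (le_min hx (abs_nonneg _))]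
        exact mul_le_mul (hWb ω) ((min_le_right _ _).trans (hWb ω))
          (le_min hx (abs_nonneg _)) hM) 1).integrable le_rfl
    have hcov := ofReal_abs_covariance_clip_clipSum_le (P := P) hY hmix hM hx hFm hF n hq
    set C := cov[fun ω => clip x (clipSum Y M n ω), fun ω => clip M (Y (n + 1) ω); P] with hC
    set E := ∫ ω, clip M (Y (n + 1) ω) ∂P with hE
    set B := ∫ ω, |clip M (Y (n + 1) ω)| * min x |clip M (Y (n + 1) ω)| ∂P
    have hB0 : 0 ≤ B := integral_nonneg fun ω => mul_nonneg (abs_nonneg _)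
      (le_min hx (abs_nonneg _))
    have hCeq := covariance_eq_sub (hL 2) (hWL 2)
    have h1 : |∫ ω, clip x (clipSum Y M n ω) ∂P| ≤ x := by
      have := norm_integral_le_of_norm_le_const (μ := P) (C := x)
        (f := fun ω => clip x (clipSum Y M n ω)) (.of_forall fun ω => abs_clip_le hx _)
      simpa using this
    have hreal : ∫ ω, huber x (clipSum Y M (n + 1) ω) ∂P ≤
        ∫ ω, huber x (clipSum Y M n ω) ∂P + (2 * B + x * |E| + |C|) := by
      have h2 : ∫ ω, huber x (clipSum Y M (n + 1) ω) ∂P ≤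
          ∫ ω, (huber x (clipSum Y M n ω) +
            clip x (clipSum Y M n ω) * clip M (Y (n + 1) ω) +
            2 * (|clip M (Y (n + 1) ω)| * min x |clip M (Y (n + 1) ω)|)) ∂P := by
        refine integral_mono (hHi _) (((hHi n).add hi2).add (hi3.const_mul 2)) fun ω => ?_
        have := huber_add_sub_le hx (clipSum Y M n ω) (clip M (Y (n + 1) ω))
        simp only [clipSum_succ]
        linarith
      have h12 : Integrable (fun ω => huber x (clipSum Y M n ω) +
          clip x (clipSum Y M n ω) * clip M (Y (n + 1) ω)) P := (hHi n).add hi2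
      rw [integral_add h12 (hi3.const_mul 2), integral_add (hHi n) hi2,
        integral_const_mul] at h2
      have h3 : ∫ ω, clip x (clipSum Y M n ω) * clip M (Y (n + 1) ω) ∂P =
          C + (∫ ω, clip x (clipSum Y M n ω) ∂P) * E := by
        rw [hC, hCeq]; simp [hE]
      have h4 : (∫ ω, clip x (clipSum Y M n ω) ∂P) * E ≤ x * |E| :=
        (le_abs_self _).trans (by rw [abs_mul]; gcongr)
      linarith [le_abs_self C]
    calc _ ≤ ENNReal.ofReal (∫ ω, huber x (clipSum Y M n ω) ∂P + (2 * B + x * |E| + |C|)) :=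
          ENNReal.ofReal_le_ofReal hreal
      _ = ENNReal.ofReal (∫ ω, huber x (clipSum Y M n ω) ∂P) +
          (2 * ENNReal.ofReal B + ENNReal.ofReal x * ENNReal.ofReal |E| +
            ENNReal.ofReal |C|) := by
        rw [ENNReal.ofReal_add (integral_nonneg fun ω => huber_nonneg hx _) (by positivity),
          ENNReal.ofReal_add (by positivity) (by positivity),
          ENNReal.ofReal_add (by positivity) (by positivity), ENNReal.ofReal_mul hx,
          ENNReal.ofReal_mul zero_le_two, ENNReal.ofReal_ofNat]
      _ ≤ _ := add_le_add ih (add_le_add (add_le_add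
          (mul_le_mul_right (hβ _ (Nat.le_add_left _ _)) _)
          (mul_le_mul_right (hτ _ (Nat.le_add_left _ _)) _)) hcov)
      _ = _ := by push_cast; ring

end ClipSum

/-- The generalized inverse of a sequence of real numbers. -/
noncomputable def seqInverse (α : ℕ → ℝ) (u : ℝ) : ℝ≥0∞ :=
  sInf ((fun m : ℕ => (m : ℝ≥0∞)) '' {m | α m ≤ u})

section SeqInverse

variable {α : ℕ → ℝ}

lemma antitone_seqInverse : Antitone (seqInverse α) := fun _ _ huv =>
  sInf_le_sInf (image_mono fun _ hm => le_trans hm huv)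

lemma seqInverse_le {m : ℕ} {u : ℝ} (h : α m ≤ u) : seqInverse α u ≤ m :=
  sInf_le ⟨m, h, rfl⟩

lemma le_seqInverse (hα : Antitone α) {k : ℕ} {u : ℝ} (h : u < α k) :
    (k : ℝ≥0∞) + 1 ≤ seqInverse α u := by
  refine le_sInf ?_
  rintro _ ⟨m, hm, rfl⟩
  have : k + 1 ≤ m := by
    by_contra hcon
    exact absurd (hα (by omega : m ≤ k)) (not_le.2 (lt_of_le_of_lt hm h))
  show (k : ℝ≥0∞) + 1 ≤ (m : ℝ≥0∞)
  exact_mod_cast this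

lemma lintegral_Ioc_one_le_of_antitone {φ : ℝ → ℝ≥0∞} (hφ : Antitone φ) :
    ∫⁻ u in Ioc (0 : ℝ) 1, φ u ≤ 2 * ∫⁻ u in Ioo (0 : ℝ) (1 / 2), φ u := by
  have h1 : ∫⁻ u in Icc (1 / 2 : ℝ) 1, φ u ≤ φ (1 / 2) * ENNReal.ofReal (1 / 2) := by
    refine (setLIntegral_mono' measurableSet_Icc fun u hu => hφ hu.1).trans (le_of_eq ?_)
    rw [setLIntegral_const, Real.volume_Icc]; norm_num
  have h2 : φ (1 / 2) * ENNReal.ofReal (1 / 2) ≤ ∫⁻ u in Ioo (0 : ℝ) (1 / 2), φ u := by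
    refine (le_of_eq ?_).trans (setLIntegral_mono' measurableSet_Ioo fun u hu => hφ hu.2.le)
    rw [setLIntegral_const, Real.volume_Ioo]; norm_num
  calc ∫⁻ u in Ioc (0 : ℝ) 1, φ u
      ≤ ∫⁻ u in Ioo (0 : ℝ) (1 / 2) ∪ Icc (1 / 2) 1, φ u :=
        lintegral_mono_set fun u hu => by
          rcases lt_or_ge u (1 / 2) with h | h
          · exact Or.inl ⟨hu.1, h⟩
          · exact Or.inr ⟨h, hu.2⟩
    _ ≤ _ := lintegral_union_le _ _ _
    _ ≤ _ := by rw [two_mul]; exact add_le_add le_rfl (h1.trans h2)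

/-- The truncation level `M` and the lag `q` adapted to a level `x`. -/
lemma exists_truncation_level (hα : Antitone α) (hα0 : α 0 = 1 / 2) {Q : ℝ → ℝ≥0∞}
    (hQ : Antitone Q) (hQfin : ∀ u, 0 < u → Q u ≠ ∞) {x : ℝ≥0∞} (hx : x ≠ ∞) :
    ∃ (u₀ : ℝ) (M : ℝ≥0) (q : ℕ), u₀ ≤ 1 / 2 ∧
      (∀ u, 0 < u → u < u₀ → x ≤ seqInverse α u * Q u) ∧ (∀ u, u₀ < u → Q u ≤ M) ∧
      (q : ℝ≥0∞) * M ≤ x ∧ (α (q + 1) ≤ u₀ ∨ M = 0) := by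
  set A : Set ℝ := {u | 0 < u ∧ seqInverse α u * Q u ≤ x}
  have hinv : seqInverse α (1 / 2) = 0 := le_antisymm (by
    simpa using seqInverse_le (α := α) (m := 0) hα0.le) (zero_le)
  have hmem : (1 / 2 : ℝ) ∈ A := ⟨by norm_num, by rw [hinv, zero_mul]; exact zero_le⟩
  have hbdd : BddBelow A := ⟨0, fun u hu => hu.1.le⟩
  set u₀ := sInf A with hu₀
  have hu₀0 : 0 ≤ u₀ := le_csInf ⟨_, hmem⟩ fun u hu => hu.1.le
  have hbelow : ∀ u, 0 < u → u < u₀ → x ≤ seqInverse α u * Q u := fun u h0 hu => by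
    by_contra hcon
    exact notMem_of_lt_csInf hu hbdd ⟨h0, (not_le.1 hcon).le⟩
  have habove : ∀ u, u₀ < u → seqInverse α u * Q u ≤ x := fun u hu => by
    obtain ⟨v, hv, hvu⟩ := exists_lt_of_csInf_lt ⟨_, hmem⟩ hu
    exact (mul_le_mul' (antitone_seqInverse hvu.le) (hQ hvu.le)).trans hv.2
  set M : ℝ≥0∞ := ⨆ u : Ioi u₀, Q u with hM
  set L : ℝ≥0∞ := ⨆ u : Ioi u₀, seqInverse α u with hL
  have hLM : L * M ≤ x := by
    rw [hL, hM, ENNReal.iSup_mul]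
    refine iSup_le fun u => ?_
    rw [ENNReal.mul_iSup]
    refine iSup_le fun v => ?_
    refine le_trans ?_ (habove (min u v) (lt_min u.2 v.2))
    exact mul_le_mul' (antitone_seqInverse (min_le_left _ _)) (hQ (min_le_right _ _))
  have hQM : ∀ u, u₀ < u → Q u ≤ M := fun u hu => le_iSup (fun u : Ioi u₀ => Q u) ⟨u, hu⟩
  have hLle : ∀ u, u₀ < u → seqInverse α u ≤ L := fun u hu =>
    le_iSup (fun u : Ioi u₀ => seqInverse α u) ⟨u, hu⟩
  have hMfin : M ≠ ∞ := by
    rcases hu₀0.eq_or_lt with h | h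
    · intro hMt
      have h1 : 1 ≤ L := le_trans (by
        simpa using le_seqInverse (α := α) hα (k := 0) (u := 1 / 4) (by rw [hα0]; norm_num))
        (hLle (1 / 4) (by rw [← h]; norm_num))
      rw [hMt, ENNReal.mul_top (zero_lt_one.trans_le h1).ne'] at hLM
      exact hx (top_le_iff.1 hLM)
    · exact ne_top_of_le_ne_top (hQfin u₀ h) (iSup_le fun u => hQ u.2.le)
  refine ⟨u₀, M.toNNReal, ?_⟩
  rw [ENNReal.coe_toNNReal hMfin]
  rcases eq_or_ne M 0 with hM0 | hM0
  · exact ⟨0, csInf_le hbdd hmem, hbelow, hQM, by simp, Or.inr (by simp [hM0])⟩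
  have hLfin : L ≠ ∞ := fun h => by
    rw [h, ENNReal.top_mul hM0] at hLM
    exact hx (top_le_iff.1 hLM)
  obtain ⟨n, hn⟩ := ENNReal.exists_nat_gt hLfin
  have hex : ∃ m, α m ≤ u₀ := by
    refine ⟨n, le_of_forall_gt_imp_ge_of_dense fun u hu => ?_⟩
    by_contra hcon
    have := (le_seqInverse hα (not_le.1 hcon)).trans (hLle u hu)
    exact absurd (hn.trans_le le_self_add) (not_lt.2 this)
  rcases hfind : Nat.find hex with _ | q
  · refine ⟨0, csInf_le hbdd hmem, hbelow, hQM, by simp, Or.inl ?_⟩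
    have := Nat.find_spec hex
    rw [hfind] at this
    exact (hα (Nat.zero_le _)).trans this
  · refine ⟨q, csInf_le hbdd hmem, hbelow, hQM, ?_, Or.inl ?_⟩
    · have hq : u₀ < α q := not_le.1 (Nat.find_min hex (by omega))
      obtain ⟨u, hu, huq⟩ := exists_between hq
      exact (mul_le_mul_left ((le_self_add).trans
        ((le_seqInverse hα huq).trans (hLle u hu))) _).trans hLM
    · have := Nat.find_spec hex
      rwa [hfind] at this

/-- With an adapted truncation level, all error terms are controlled by one integral. -/
lemma truncation_terms_le (hα : Antitone α) (hα0 : α 0 = 1 / 2) {Q : ℝ → ℝ≥0∞}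
    (hQ : Antitone Q) {x : ℝ≥0∞} {u₀ : ℝ} {M : ℝ≥0} {q : ℕ} (hu₀ : u₀ ≤ 1 / 2)
    (h1 : ∀ u, 0 < u → u < u₀ → x ≤ seqInverse α u * Q u) (h2 : ∀ u, u₀ < u → Q u ≤ M)
    (h3 : (q : ℝ≥0∞) * M ≤ x) (h4 : α (q + 1) ≤ u₀ ∨ M = 0) :
    x * (∫⁻ u in Ioc (0 : ℝ) 1, (Q u - M)) +
      (2 * (∫⁻ u in Ioc (0 : ℝ) 1, Q u * min x (Q u)) + x * (∫⁻ u in Ioc (0 : ℝ) 1, (Q u - M)) +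
        (∑ k ∈ Finset.Ico 1 (q + 1),
          4 * (∫⁻ u in Ioo 0 (α k), min (Q u) M * min (Q u) M) +
          4 * ∫⁻ u in Ioo 0 (α (q + 1)), x * min (Q u) M)) ≤
      12 * ∫⁻ u in Ioc (0 : ℝ) 1, Q u * min x (seqInverse α u * Q u) := by
  have hQm := hQ.measurable
  set J := ∫⁻ u in Ioc (0 : ℝ) 1, Q u * min x (seqInverse α u * Q u)
  have hβ : ∫⁻ u in Ioc (0 : ℝ) 1, Q u * min x (Q u) ≤ 2 * J := by
    refine (lintegral_Ioc_one_le_of_antitone fun u v huv =>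
      mul_le_mul' (hQ huv) (min_le_min le_rfl (hQ huv))).trans ?_
    gcongr
    refine le_trans ?_ (lintegral_mono_set (s := Ioo 0 (1 / 2)) fun u hu =>
      ⟨hu.1, hu.2.le.trans (by norm_num)⟩)
    refine setLIntegral_mono' measurableSet_Ioo fun u hu => ?_
    gcongr
    have : 1 ≤ seqInverse α u := by
      simpa using le_seqInverse (α := α) hα (k := 0) (u := u) (by rw [hα0]; exact hu.2)
    exact le_mul_of_one_le_left' this
  have hne : ∀ᵐ u ∂volume.restrict (Ioc (0 : ℝ) 1), u ≠ u₀ :=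
    ae_restrict_of_ae (by simp [ae_iff])
  have hτ : x * (∫⁻ u in Ioc (0 : ℝ) 1, (Q u - M)) +
      (∫⁻ u in Ioo 0 (α (q + 1)), x * min (Q u) M) ≤ J := by
    have hle : ∫⁻ u in Ioo 0 (α (q + 1)), x * min (Q u) M ≤
        ∫⁻ u in Ioc (0 : ℝ) 1, (Iio u₀).indicator (fun u => x * min (Q u) M) u := by
      rcases h4 with h4 | h4
      · rw [setLIntegral_indicator measurableSet_Iio]
        exact lintegral_mono_set fun u hu =>
          ⟨hu.2.trans_le h4, hu.1, by linarith [hu.2.trans_le h4]⟩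
      · simp [h4]
    refine (add_le_add_right hle _).trans ?_
    rw [← lintegral_const_mul _ (hQm.sub_const _),
      ← lintegral_add_left ((hQm.sub_const _).const_mul _)]
    refine lintegral_mono_ae ?_
    filter_upwards [hne, ae_restrict_mem measurableSet_Ioc] with u hu hu01
    rcases lt_or_gt_of_ne hu with h | h
    · rw [indicator_of_mem (show u ∈ Iio u₀ from h), ← mul_add, min_eq_left (h1 u hu01.1 h),
        mul_comm (Q u)]
      gcongr
      rcases le_total (Q u) M with h' | h'
      · rw [tsub_eq_zero_of_le h', zero_add]; exact min_le_left _ _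
      · rw [min_eq_right h', tsub_add_cancel_of_le h']
    · rw [indicator_of_notMem (show u ∉ Iio u₀ from not_lt.2 h.le),
        tsub_eq_zero_of_le (h2 u h), mul_zero, add_zero]
      exact zero_le
  have hS : ∑ k ∈ Finset.Ico 1 (q + 1), ∫⁻ u in Ioo 0 (α k), min (Q u) M * min (Q u) M ≤ J := by
    have heq : ∀ k, ∫⁻ u in Ioo 0 (α k), min (Q u) M * min (Q u) M =
        ∫⁻ u in Ioc (0 : ℝ) 1, (Iio (α k)).indicator (fun u => min (Q u) M * min (Q u) M) u := by
      intro k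
      rw [setLIntegral_indicator measurableSet_Iio]
      congr 2
      ext u
      have := hα (Nat.zero_le k)
      simp only [mem_Ioo, mem_inter_iff, mem_Iio, mem_Ioc]
      constructor
      · rintro ⟨a, b⟩; exact ⟨b, a, by linarith⟩
      · rintro ⟨a, b, _⟩; exact ⟨b, a⟩
    simp_rw [heq]
    rw [← lintegral_finsetSum (f := fun k : ℕ =>
      (Iio (α k)).indicator fun u => min (Q u) (M : ℝ≥0∞) * min (Q u) M) _ fun k _ =>
      ((hQm.min measurable_const).mul (hQm.min measurable_const)).indicator measurableSet_Iio]
    refine lintegral_mono fun u => ?_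
    have hsum : ∑ k ∈ Finset.Ico 1 (q + 1),
        (Iio (α k)).indicator (fun u => min (Q u) M * min (Q u) M) u =
        (((Finset.Ico 1 (q + 1)).filter fun k => u < α k).card : ℝ≥0∞) *
          (min (Q u) M * min (Q u) M) := by
      simp only [indicator_apply, mem_Iio]
      rw [← Finset.sum_filter, Finset.sum_const, nsmul_eq_mul]
    rw [hsum]
    set s := (Finset.Ico 1 (q + 1)).filter fun k => u < α k
    have c1 : (s.card : ℝ≥0∞) ≤ q := by
      have : s.card ≤ q := by simpa using Finset.card_filter_le (Finset.Ico 1 (q + 1)) _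
      exact_mod_cast this
    have c2 : (s.card : ℝ≥0∞) ≤ seqInverse α u := by
      rcases s.eq_empty_or_nonempty with h | h
      · simp [h]
      · have hmax := Finset.max'_mem s h
        have hsub : s ⊆ Finset.Icc 1 (s.max' h) := fun k hk =>
          Finset.mem_Icc.2 ⟨(Finset.mem_Ico.1 (Finset.mem_filter.1 hk).1).1,
            Finset.le_max' s k hk⟩
        have hcard : s.card ≤ s.max' h := by simpa using Finset.card_le_card hsub
        have := le_seqInverse hα (Finset.mem_filter.1 hmax).2
        exact le_trans (by exact_mod_cast hcard) (le_self_add.trans this)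
    calc (s.card : ℝ≥0∞) * (min (Q u) M * min (Q u) M)
        = min (Q u) M * (s.card * min (Q u) M) := by ring
      _ ≤ _ := by
        refine mul_le_mul' (min_le_left _ _) (le_min ?_ ?_)
        · exact (mul_le_mul' c1 (min_le_right _ _)).trans h3
        · exact mul_le_mul' c2 (min_le_left _ _)
  rw [← Finset.mul_sum]
  set t := x * ∫⁻ u in Ioc (0 : ℝ) 1, (Q u - M)
  set b := ∫⁻ u in Ioc (0 : ℝ) 1, Q u * min x (Q u)
  set T := ∑ k ∈ Finset.Ico 1 (q + 1), ∫⁻ u in Ioo 0 (α k), min (Q u) M * min (Q u) M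
  set v := ∫⁻ u in Ioo 0 (α (q + 1)), x * min (Q u) M
  calc t + (2 * b + t + (4 * T + 4 * v)) ≤ 2 * b + 4 * T + 4 * (t + v) := by
        have : 2 * t ≤ 4 * t := mul_le_mul_left (by norm_num) _
        calc _ = 2 * b + 4 * T + (2 * t + 4 * v) := by ring
          _ ≤ 2 * b + 4 * T + (4 * t + 4 * v) := by gcongr
          _ = _ := by ring
    _ ≤ 2 * (2 * J) + 4 * J + 4 * J := by gcongr
    _ = _ := by ring

end SeqInverse

section Moment

variable {Ω : Type*} [MeasurableSpace Ω] {P : Measure Ω} [IsProbabilityMeasure P] {Y : ℕ → Ω → ℝ}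

lemma lintegral_comp_enorm_eq_of_map_eq (hY : ∀ i, Measurable (Y i))
    (hlaw : ∀ j, P.map (Y j) = P.map (Y 1)) (j : ℕ) {φ : ℝ≥0∞ → ℝ≥0∞} (hφ : Measurable φ) :
    ∫⁻ ω, φ ‖Y j ω‖ₑ ∂P =
      ∫⁻ u in Ioc (0 : ℝ) 1, φ (tailQuantile P (fun ω => ‖Y 1 ω‖ₑ) u) := by
  rw [← lintegral_comp_eq_lintegral_tailQuantile P (hY 1).enorm hφ]
  have hm : Measurable fun y : ℝ => φ ‖y‖ₑ := hφ.comp measurable_enorm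
  rw [← lintegral_map (f := fun y : ℝ => φ ‖y‖ₑ) hm (hY j), hlaw j, lintegral_map hm (hY 1)]

lemma ofReal_abs_sub_clip {M : ℝ≥0} (y : ℝ) :
    ENNReal.ofReal |y - clip M y| = ‖y‖ₑ - M := by
  rw [abs_sub_clip M.coe_nonneg, Real.enorm_eq_ofReal_abs, ENNReal.ofReal_max, ENNReal.ofReal_zero,
    max_eq_left (zero_le), ENNReal.ofReal_sub _ M.coe_nonneg, ENNReal.ofReal_coe_nnreal]

/-- A bound on the Huber functional of the partial sums of a stationary mixing sequence. -/
lemma lintegral_huber_sum_le (hY : ∀ i, Measurable (Y i))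
    (hlaw : ∀ j, P.map (Y j) = P.map (Y 1)) (hY1 : Integrable (Y 1) P)
    (hcent : ∫ ω, Y 1 ω ∂P = 0) {α : ℕ → ℝ} (hα : Antitone α) (hα0 : α 0 = 1 / 2)
    (hmix : ∀ i m, 1 ≤ m → ∀ A B : Set Ω,
      MeasurableSet[⨆ k ∈ Iic i, MeasurableSpace.comap (Y k) inferInstance] A →
      MeasurableSet[⨆ j ∈ Ici (i + m), MeasurableSpace.comap (Y j) inferInstance] B →
      |P.real A * P.real B - P.real (A ∩ B)| ≤ α m) (n : ℕ) {x : ℝ} (hx : 0 ≤ x) :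
    ∫⁻ ω, ENNReal.ofReal (huber x (∑ j ∈ Finset.range n, Y (j + 1) ω)) ∂P ≤
      12 * n * ∫⁻ u in Ioc (0 : ℝ) 1, tailQuantile P (fun ω => ‖Y 1 ω‖ₑ) u *
        min (ENNReal.ofReal x) (seqInverse α u * tailQuantile P (fun ω => ‖Y 1 ω‖ₑ) u) := by
  have hdist := fun j (φ : ℝ≥0∞ → ℝ≥0∞) (hφ : Measurable φ) =>
    lintegral_comp_enorm_eq_of_map_eq (P := P) hY hlaw j hφ
  have hQ := antitone_tailQuantile P (fun ω => ‖Y 1 ω‖ₑ)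
  have htail : ∀ j u, P {ω | tailQuantile P (fun ω => ‖Y 1 ω‖ₑ) u < ‖Y j ω‖ₑ} ≤
      ENNReal.ofReal u := fun j u => by
    have hms : MeasurableSet {y : ℝ | tailQuantile P (fun ω => ‖Y 1 ω‖ₑ) u < ‖y‖ₑ} :=
      measurableSet_lt measurable_const measurable_enorm
    have := measure_tailQuantile_lt_le P (fun ω => ‖Y 1 ω‖ₑ) u
    have e : ∀ j, P {ω | tailQuantile P (fun ω => ‖Y 1 ω‖ₑ) u < ‖Y j ω‖ₑ} =
        P.map (Y j) {y : ℝ | tailQuantile P (fun ω => ‖Y 1 ω‖ₑ) u < ‖y‖ₑ} := fun j => by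
      rw [Measure.map_apply (hY j) hms]; rfl
    rw [e, hlaw, ← e]
    exact this
  set Q := tailQuantile P (fun ω => ‖Y 1 ω‖ₑ)
  have hQint : ∫⁻ u in Ioc (0 : ℝ) 1, Q u ≠ ∞ := by
    have := hdist 1 id measurable_id
    simp only [id] at this
    rw [← this]; exact hY1.2.ne
  have hQfin : ∀ u, 0 < u → Q u ≠ ∞ := fun u hu htop => by
    refine hQint (top_le_iff.1 ?_)
    refine le_trans ?_ (lintegral_mono_set (s := Ioc 0 (min u 1))
      fun v hv => ⟨hv.1, hv.2.trans (min_le_right _ _)⟩)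
    refine le_trans ?_ (setLIntegral_mono' (f := fun _ => ∞) measurableSet_Ioc fun v hv =>
      htop ▸ hQ (hv.2.trans (min_le_left _ _)))
    rw [setLIntegral_const, Real.volume_Ioc, ENNReal.top_mul]
    simp [hu]
  obtain ⟨u₀, M, q, hu₀, h1, h2, h3, h4⟩ :=
    exists_truncation_level hα hα0 hQ hQfin (ENNReal.ofReal_ne_top (r := x))
  have hYint : ∀ j, Integrable (Y j) P := fun j => by
    have : Integrable id (P.map (Y 1)) :=
      (integrable_map_measure (by fun_prop) (hY 1).aemeasurable).2 hY1
    rw [← hlaw j] at this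
    exact (integrable_map_measure (by fun_prop) (hY j).aemeasurable).1 this
  have hYcent : ∀ j, ∫ ω, Y j ω ∂P = 0 := fun j => by
    rw [← hcent, ← integral_map (φ := Y j) (f := fun y => y) (hY j).aemeasurable (by fun_prop),
      hlaw j, integral_map (hY 1).aemeasurable (by fun_prop)]
  have hcm : ∀ j, Measurable fun ω => clip M (Y j ω) := fun j => (measurable_clip M).comp (hY j)
  have hcL : ∀ j, Integrable (fun ω => clip M (Y j ω)) P := fun j =>
    (memLp_of_abs_le (hcm j) (fun ω => abs_clip_le M.coe_nonneg _) 1).integrable le_rfl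
  have hexc : ∀ j, ∫⁻ ω, ENNReal.ofReal |Y j ω - clip M (Y j ω)| ∂P =
      ∫⁻ u in Ioc (0 : ℝ) 1, (Q u - M) := fun j => by
    simp_rw [ofReal_abs_sub_clip]
    exact hdist j (fun t => t - M) (measurable_id.sub_const _)
  have hτ : ∀ j, 1 ≤ j → ENNReal.ofReal |∫ ω, clip M (Y j ω) ∂P| ≤
      ∫⁻ u in Ioc (0 : ℝ) 1, (Q u - M) := fun j _ => by
    rw [← hexc j]
    have : |∫ ω, clip M (Y j ω) ∂P| = ‖∫ ω, (Y j ω - clip M (Y j ω)) ∂P‖ := by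
      rw [integral_sub (hYint j) (hcL j), hYcent j, zero_sub, norm_neg, Real.norm_eq_abs]
    rw [this, ofReal_norm]
    refine (enorm_integral_le_lintegral_enorm _).trans (le_of_eq ?_)
    simp_rw [Real.enorm_eq_ofReal_abs]
  have hβ : ∀ j, 1 ≤ j →
      ENNReal.ofReal (∫ ω, |clip M (Y j ω)| * min x |clip M (Y j ω)| ∂P) ≤
      ∫⁻ u in Ioc (0 : ℝ) 1, Q u * min (ENNReal.ofReal x) (Q u) := fun j _ => by
    rw [← hdist j (fun t => t * min (ENNReal.ofReal x) t) (by fun_prop),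
      integral_eq_lintegral_of_nonneg_ae (.of_forall fun ω => mul_nonneg (abs_nonneg _)
        (le_min hx (abs_nonneg _))) (by have := hcm j; fun_prop)]
    refine ENNReal.ofReal_toReal_le.trans (lintegral_mono fun ω => ?_)
    have hle := ENNReal.ofReal_le_ofReal (abs_clip_le_abs M.coe_nonneg (Y j ω))
    rw [ENNReal.ofReal_mul (abs_nonneg _), ENNReal.ofReal_min, Real.enorm_eq_ofReal_abs]
    exact mul_le_mul' hle (min_le_min le_rfl hle)
  have hF : ∀ j, ∀ u : ℝ, 0 < u →
      P {ω | min (Q u) M < ‖clip M (Y j ω)‖ₑ} ≤ ENNReal.ofReal u := fun j u _ => by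
    refine (measure_mono fun ω (hω : min (Q u) M < ‖clip M (Y j ω)‖ₑ) => ?_).trans (htail j u)
    rw [Real.enorm_eq_ofReal_abs] at hω
    have hle : ENNReal.ofReal |clip M (Y j ω)| ≤ M := by
      rw [← ENNReal.ofReal_coe_nnreal]; exact ENNReal.ofReal_le_ofReal (abs_clip_le M.coe_nonneg _)
    rcases min_lt_iff.1 hω with h | h
    · refine h.trans_le ?_
      rw [Real.enorm_eq_ofReal_abs]
      exact ENNReal.ofReal_le_ofReal (abs_clip_le_abs M.coe_nonneg _)
    · exact absurd hle (not_le.2 h)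
  have hmain := ofReal_integral_huber_clipSum_le (P := P) hY hmix M.coe_nonneg hx
    (hQ.measurable.min measurable_const) hF hτ hβ (Nat.le_add_left 1 q) n
  have hTb : ∀ ω, |clipSum Y M n ω| ≤ n * M := fun ω => by
    refine (Finset.abs_sum_le_sum_abs _ _).trans ((Finset.sum_le_sum
      fun j _ => abs_clip_le M.coe_nonneg (Y (j + 1) ω)).trans (le_of_eq ?_))
    simp
  have hHm : Measurable fun ω => huber x (clipSum Y M n ω) :=
    (measurable_huber x).comp (measurable_clipSum hY n)
  have hHi : Integrable (fun ω => huber x (clipSum Y M n ω)) P :=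
    (memLp_of_abs_le hHm (b := x * (n * M)) (fun ω => by
      rw [abs_of_nonneg (huber_nonneg hx _)]
      exact (huber_le hx _).trans (mul_le_mul_of_nonneg_left (hTb ω) hx)) 1).integrable le_rfl
  have hpt : ∀ ω, ENNReal.ofReal (huber x (∑ j ∈ Finset.range n, Y (j + 1) ω)) ≤
      ENNReal.ofReal (huber x (clipSum Y M n ω)) + ENNReal.ofReal x *
        ∑ j ∈ Finset.range n, ENNReal.ofReal |Y (j + 1) ω - clip M (Y (j + 1) ω)| := fun ω => by
    rw [← ENNReal.ofReal_sum_of_nonneg fun _ _ => abs_nonneg _, ← ENNReal.ofReal_mul hx,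
      ← ENNReal.ofReal_add (huber_nonneg hx _)
        (mul_nonneg hx (Finset.sum_nonneg fun _ _ => abs_nonneg _))]
    refine ENNReal.ofReal_le_ofReal ?_
    have hsum : ∑ j ∈ Finset.range n, Y (j + 1) ω = clipSum Y M n ω +
        ∑ j ∈ Finset.range n, (Y (j + 1) ω - clip M (Y (j + 1) ω)) := by
      rw [clipSum, ← Finset.sum_add_distrib]; simp
    rw [hsum]
    refine (huber_add_le hx _ _).trans ?_
    gcongr
    exact Finset.abs_sum_le_sum_abs _ _
  have hem : ∀ j, Measurable fun ω => ENNReal.ofReal |Y j ω - clip M (Y j ω)| := fun j => by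
    have := hcm j; have := hY j; fun_prop
  calc _ ≤ ∫⁻ ω, (ENNReal.ofReal (huber x (clipSum Y M n ω)) + ENNReal.ofReal x *
        ∑ j ∈ Finset.range n, ENNReal.ofReal |Y (j + 1) ω - clip M (Y (j + 1) ω)|) ∂P :=
        lintegral_mono hpt
    _ = ENNReal.ofReal (∫ ω, huber x (clipSum Y M n ω) ∂P) +
        ENNReal.ofReal x * (n * ∫⁻ u in Ioc (0 : ℝ) 1, (Q u - M)) := by
      rw [lintegral_add_left hHm.ennreal_ofReal,
        lintegral_const_mul _ (Finset.measurable_fun_sum _ fun j _ => hem (j + 1)),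
        lintegral_finsetSum _ fun j _ => hem (j + 1),
        ofReal_integral_eq_lintegral_ofReal hHi (.of_forall fun ω => huber_nonneg hx _)]
      simp [hexc]
    _ ≤ _ := add_le_add_left hmain _
    _ = n * _ := by
      rw [mul_left_comm, ← mul_add, add_comm]
    _ ≤ _ := by
      rw [mul_comm 12, mul_assoc]
      exact mul_le_mul_right (truncation_terms_le hα hα0 hQ hu₀ h1 h2 h3 h4) _

/-- A moment inequality of Rosenthal type for stationary mixing sequences. -/
lemma lintegral_abs_sum_rpow_le (hY : ∀ i, Measurable (Y i))
    (hlaw : ∀ j, P.map (Y j) = P.map (Y 1)) (hY1 : Integrable (Y 1) P)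
    (hcent : ∫ ω, Y 1 ω ∂P = 0) {α : ℕ → ℝ} (hα : Antitone α) (hα0 : α 0 = 1 / 2)
    (hmix : ∀ i m, 1 ≤ m → ∀ A B : Set Ω,
      MeasurableSet[⨆ k ∈ Iic i, MeasurableSpace.comap (Y k) inferInstance] A →
      MeasurableSet[⨆ j ∈ Ici (i + m), MeasurableSpace.comap (Y j) inferInstance] B →
      |P.real A * P.real B - P.real (A ∩ B)| ≤ α m) (n : ℕ) {p : ℝ} (hp1 : 1 < p) (hp2 : p < 2) :
    ∫⁻ ω, ENNReal.ofReal |∑ j ∈ Finset.range n, Y (j + 1) ω| ^ p ∂P ≤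
      ENNReal.ofReal (24 / (2 - p)) * n * ∫⁻ u in Ioc (0 : ℝ) 1,
        seqInverse α u ^ (p - 1) * tailQuantile P (fun ω => ‖Y 1 ω‖ₑ) u ^ p := by
  set Q := tailQuantile P (fun ω => ‖Y 1 ω‖ₑ)
  have hQm : Measurable Q := (antitone_tailQuantile P _).measurable
  have hRm : Measurable (seqInverse α) := antitone_seqInverse.measurable
  set S : Ω → ℝ := fun ω => ∑ j ∈ Finset.range n, Y (j + 1) ω
  have hSm : Measurable S := Finset.measurable_fun_sum _ fun j _ => hY (j + 1)
  have hwm : Measurable fun x : ℝ => ENNReal.ofReal (x ^ (p - 3)) := by fun_prop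
  have hjm : Measurable fun z : Ω × ℝ => ENNReal.ofReal (z.2 ^ (p - 3)) *
      ENNReal.ofReal (huber z.2 (S z.1)) :=
    (hwm.comp measurable_snd).mul (continuous_huber_uncurry.measurable.comp
      (measurable_snd.prodMk (hSm.comp measurable_fst))).ennreal_ofReal
  have hHm : ∀ x, Measurable fun ω => ENNReal.ofReal (huber x (S ω)) := fun x =>
    ((measurable_huber x).comp hSm).ennreal_ofReal
  calc ∫⁻ ω, ENNReal.ofReal |S ω| ^ p ∂P
      ≤ ∫⁻ ω, ENNReal.ofReal (2 * (p - 1)) * (∫⁻ x in Ioi (0 : ℝ),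
          ENNReal.ofReal (x ^ (p - 3)) * ENNReal.ofReal (huber x (S ω))) ∂P :=
        lintegral_mono fun ω => abs_rpow_le_lintegral_huber hp1 _
    _ = ENNReal.ofReal (2 * (p - 1)) * ∫⁻ x in Ioi (0 : ℝ), ENNReal.ofReal (x ^ (p - 3)) *
          ∫⁻ ω, ENNReal.ofReal (huber x (S ω)) ∂P := by
        rw [lintegral_const_mul _ hjm.lintegral_prod_right', lintegral_lintegral_swap]
        · congr 1
          exact lintegral_congr fun x => by dsimp only; exact lintegral_const_mul _ (hHm x)
        · exact hjm.aemeasurable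
    _ ≤ ENNReal.ofReal (2 * (p - 1)) * ∫⁻ x in Ioi (0 : ℝ), ENNReal.ofReal (x ^ (p - 3)) *
          (12 * n * ∫⁻ u in Ioc (0 : ℝ) 1,
            Q u * min (ENNReal.ofReal x) (seqInverse α u * Q u)) := by
        refine mul_le_mul_right (setLIntegral_mono' measurableSet_Ioi fun x hx => ?_) _
        exact mul_le_mul_right
          (lintegral_huber_sum_le hY hlaw hY1 hcent hα hα0 hmix n (le_of_lt hx)) _
    _ = ENNReal.ofReal (2 * (p - 1)) * (12 * n * ∫⁻ u in Ioc (0 : ℝ) 1, Q u *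
          ∫⁻ x in Ioi (0 : ℝ), ENNReal.ofReal (x ^ (p - 3)) *
            min (ENNReal.ofReal x) (seqInverse α u * Q u)) := by
        congr 1
        have e1 : ∀ x : ℝ, ENNReal.ofReal (x ^ (p - 3)) * (12 * n * ∫⁻ u in Ioc (0 : ℝ) 1,
            Q u * min (ENNReal.ofReal x) (seqInverse α u * Q u)) =
            12 * n * ∫⁻ u in Ioc (0 : ℝ) 1, Q u * (ENNReal.ofReal (x ^ (p - 3)) *
              min (ENNReal.ofReal x) (seqInverse α u * Q u)) := fun x => by
          rw [mul_left_comm, ← lintegral_const_mul _ (by fun_prop)]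
          congr 2; funext u; ring
        simp_rw [e1]
        have hm2 : Measurable fun z : ℝ × ℝ => Q z.2 * (ENNReal.ofReal (z.1 ^ (p - 3)) *
            min (ENNReal.ofReal z.1) (seqInverse α z.2 * Q z.2)) := by fun_prop
        rw [lintegral_const_mul _ hm2.lintegral_prod_right',
          lintegral_lintegral_swap hm2.aemeasurable]
        congr 1
        refine lintegral_congr fun u => ?_
        dsimp only
        rw [lintegral_const_mul _ (by fun_prop)]
    _ ≤ ENNReal.ofReal (2 * (p - 1)) * (12 * n * ∫⁻ u in Ioc (0 : ℝ) 1, Q u *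
          (ENNReal.ofReal (1 / ((p - 1) * (2 - p))) * (seqInverse α u * Q u) ^ (p - 1))) := by
        gcongr with u
        exact lintegral_rpow_mul_min_le hp1 hp2 _
    _ = _ := by
        have e2 : ∀ u, Q u * (ENNReal.ofReal (1 / ((p - 1) * (2 - p))) *
            (seqInverse α u * Q u) ^ (p - 1)) = ENNReal.ofReal (1 / ((p - 1) * (2 - p))) *
            (seqInverse α u ^ (p - 1) * Q u ^ p) := fun u => by
          have : Q u ^ p = Q u * Q u ^ (p - 1) := by
            conv_lhs => rw [show p = 1 + (p - 1) by ring]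
            rw [ENNReal.rpow_add_of_nonneg _ _ zero_le_one (by linarith), ENNReal.rpow_one]
          rw [this, ENNReal.mul_rpow_of_nonneg _ _ (by linarith)]; ring
        have hRQ : Measurable fun u => seqInverse α u ^ (p - 1) * Q u ^ p :=
          (hRm.pow_const _).mul (hQm.pow_const _)
        simp_rw [e2]
        rw [lintegral_const_mul _ hRQ]
        have e3 : ENNReal.ofReal (24 / (2 - p)) = ENNReal.ofReal (2 * (p - 1)) * 12 *
            ENNReal.ofReal (1 / ((p - 1) * (2 - p))) := by
          rw [← ENNReal.ofReal_ofNat 12, ← ENNReal.ofReal_mul (by linarith),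
            ← ENNReal.ofReal_mul (by linarith)]
          have h1 : p - 1 ≠ 0 := by linarith
          have h2 : 2 - p ≠ 0 := by linarith
          congr 1; field_simp; norm_num
        rw [e3]; ring

end Moment

section Mixing

variable {Ω : Type*} [MeasurableSpace Ω] {P : Measure Ω} {Y : ℕ → Ω → ℝ} {α : ℕ → ℝ}

lemma mixing_coefficient_le (hα : ∀ m, 1 ≤ m → α m = ⨆ i : ℕ, sSup {r : ℝ | ∃ A B : Set Ω,
      MeasurableSet[⨆ k ∈ Iic i, MeasurableSpace.comap (Y k) inferInstance] A ∧
      MeasurableSet[⨆ j ∈ Ici (i + m), MeasurableSpace.comap (Y j) inferInstance] B ∧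
      r = |(P A).toReal * (P B).toReal - (P (A ∩ B)).toReal|})
    {m : ℕ} (hm : 1 ≤ m) {c : ℝ} (hc : 0 ≤ c)
    (h : ∀ (i : ℕ) (A B : Set Ω),
      MeasurableSet[⨆ k ∈ Iic i, MeasurableSpace.comap (Y k) inferInstance] A →
      MeasurableSet[⨆ j ∈ Ici (i + m), MeasurableSpace.comap (Y j) inferInstance] B →
      |P.real A * P.real B - P.real (A ∩ B)| ≤ c) : α m ≤ c := by
  rw [hα m hm]
  refine ciSup_le fun i => Real.sSup_le ?_ hc
  rintro _ ⟨A, B, hA, hB, rfl⟩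
  exact h i A B hA hB

variable [IsProbabilityMeasure P]

lemma abs_measureReal_mul_sub_inter_le_half {A B : Set Ω} (hB : MeasurableSet B) :
    |P.real A * P.real B - P.real (A ∩ B)| ≤ 1 / 2 := by
  have e1 : P.real (A ∩ B) ≤ P.real A := measureReal_mono inter_subset_left
  have e2 : P.real (A ∩ B) ≤ P.real B := measureReal_mono inter_subset_right
  have e3 : P.real A ≤ 1 := measureReal_le_one
  have e4 : P.real B ≤ 1 := measureReal_le_one
  have e5 : 0 ≤ P.real A := measureReal_nonneg
  have e6 : 0 ≤ P.real B := measureReal_nonneg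
  have e7 : 0 ≤ P.real (A ∩ B) := measureReal_nonneg
  have e8 : P.real (A ∪ B) ≤ 1 := measureReal_le_one
  have e9 := measureReal_union_add_inter (μ := P) (s := A) hB
  rw [abs_le]
  constructor <;> nlinarith [sq_nonneg (P.real A - 1 / 2), sq_nonneg (P.real B - 1 / 2),
    sq_nonneg (P.real (A ∩ B) - 1 / 2), sq_nonneg (P.real A + P.real B - 1),
    sq_nonneg (P.real A - P.real B)]

lemma measurableSet_of_biSup_comap (hY : ∀ i, Measurable (Y i)) {I : Set ℕ} {A : Set Ω}
    (hA : MeasurableSet[⨆ k ∈ I, MeasurableSpace.comap (Y k) inferInstance] A) :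
    MeasurableSet A :=
  (iSup₂_le fun k _ => (hY k).comap_le :
    (⨆ k ∈ I, MeasurableSpace.comap (Y k) inferInstance) ≤ (inferInstance : MeasurableSpace Ω)) A hA

lemma abs_measureReal_mul_sub_inter_le_of_mixing (hY : ∀ i, Measurable (Y i))
    (hα : ∀ m, 1 ≤ m → α m = ⨆ i : ℕ, sSup {r : ℝ | ∃ A B : Set Ω,
      MeasurableSet[⨆ k ∈ Iic i, MeasurableSpace.comap (Y k) inferInstance] A ∧
      MeasurableSet[⨆ j ∈ Ici (i + m), MeasurableSpace.comap (Y j) inferInstance] B ∧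
      r = |(P A).toReal * (P B).toReal - (P (A ∩ B)).toReal|})
    (i m : ℕ) (hm : 1 ≤ m) (A B : Set Ω)
    (hA : MeasurableSet[⨆ k ∈ Iic i, MeasurableSpace.comap (Y k) inferInstance] A)
    (hB : MeasurableSet[⨆ j ∈ Ici (i + m), MeasurableSpace.comap (Y j) inferInstance] B) :
    |P.real A * P.real B - P.real (A ∩ B)| ≤ α m := by
  have hub : ∀ i, ∀ r ∈ {r : ℝ | ∃ A B : Set Ω,
      MeasurableSet[⨆ k ∈ Iic i, MeasurableSpace.comap (Y k) inferInstance] A ∧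
      MeasurableSet[⨆ j ∈ Ici (i + m), MeasurableSpace.comap (Y j) inferInstance] B ∧
      r = |(P A).toReal * (P B).toReal - (P (A ∩ B)).toReal|}, r ≤ 1 / 2 := by
    rintro i _ ⟨A, B, hA, hB, rfl⟩
    exact abs_measureReal_mul_sub_inter_le_half (measurableSet_of_biSup_comap hY hB)
  rw [hα m hm]
  refine le_trans ?_ (le_ciSup ⟨1 / 2, ?_⟩ i)
  · exact le_csSup ⟨1 / 2, hub i⟩ ⟨A, B, hA, hB, rfl⟩
  · rintro _ ⟨i, rfl⟩
    exact Real.sSup_le (hub i) (by norm_num)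

lemma antitone_mixing_coefficient (hY : ∀ i, Measurable (Y i)) (hα0 : α 0 = 1 / 2)
    (hα : ∀ m, 1 ≤ m → α m = ⨆ i : ℕ, sSup {r : ℝ | ∃ A B : Set Ω,
      MeasurableSet[⨆ k ∈ Iic i, MeasurableSpace.comap (Y k) inferInstance] A ∧
      MeasurableSet[⨆ j ∈ Ici (i + m), MeasurableSpace.comap (Y j) inferInstance] B ∧
      r = |(P A).toReal * (P B).toReal - (P (A ∩ B)).toReal|}) : Antitone α := by
  refine antitone_nat_of_succ_le fun m => ?_
  rcases Nat.eq_zero_or_pos m with rfl | hm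
  · refine mixing_coefficient_le hα le_rfl (by norm_num [hα0]) fun i A B hA hB => ?_
    rw [hα0]
    exact abs_measureReal_mul_sub_inter_le_half (measurableSet_of_biSup_comap hY hB)
  · have hle := abs_measureReal_mul_sub_inter_le_of_mixing hY hα
    refine mixing_coefficient_le hα (Nat.le_add_left 1 m)
      ((abs_nonneg _).trans (hle 0 m hm ∅ ∅ (@MeasurableSet.empty _ (_))
        (@MeasurableSet.empty _ (_))))
      fun i A B hA hB => hle i m hm A B hA ?_
    have hsub : (⨆ j ∈ Ici (i + (m + 1)), MeasurableSpace.comap (Y j) inferInstance) ≤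
        ⨆ j ∈ Ici (i + m), MeasurableSpace.comap (Y j) inferInstance :=
      biSup_mono fun j (hj : i + (m + 1) ≤ j) => (by omega : i + m ≤ j)
    exact hsub B hB

end Mixing

lemma twenty_four_div_le {p : ℝ} (hp1 : 1 < p) (hp2 : p < 2) :
    24 / (2 - p) ≤ 5 ^ p * (p * (5 - 2 * p) / ((p - 1) * (2 - p))) := by
  have h1 : 0 < p - 1 := by linarith
  have h2 : 0 < 2 - p := by linarith
  have hlog : 8 / 5 ≤ Real.log 5 := by
    rw [Real.le_log_iff_exp_le (by norm_num)]
    have h8 : Real.exp (8 / 5) ^ 5 = Real.exp 1 ^ 8 := by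
      rw [← Real.exp_nat_mul, ← Real.exp_nat_mul]; norm_num
    have he : Real.exp 1 ^ 8 ≤ 2.7182818286 ^ 8 :=
      pow_le_pow_left₀ (Real.exp_pos 1).le Real.exp_one_lt_d9.le 8
    refine le_of_pow_le_pow_left₀ (by norm_num : (5 : ℕ) ≠ 0) (by norm_num) ?_
    rw [h8]
    exact he.trans (by norm_num)
  have hb : 8 * p - 3 ≤ (5 : ℝ) ^ p := by
    have e1 : (5 : ℝ) ^ p = 5 * Real.exp (Real.log 5 * (p - 1)) := by
      rw [← Real.rpow_def_of_pos (by norm_num), Real.rpow_sub_one (by norm_num)]; ring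
    nlinarith [Real.add_one_le_exp (Real.log 5 * (p - 1)), mul_le_mul_of_nonneg_right hlog h1.le]
  have hq : 0 ≤ p * (5 - 2 * p) := by nlinarith
  have h24 : 24 * (p - 1) ≤ (8 * p - 3) * (p * (5 - 2 * p)) := by
    nlinarith [mul_pos h1 h2, mul_pos (mul_pos h1 h2) h1, mul_pos (mul_pos h1 h2) h2]
  rw [← mul_div_assoc, div_le_div_iff₀ h2 (by positivity)]
  have := mul_le_mul_of_nonneg_right (h24.trans (mul_le_mul_of_nonneg_right hb hq)) h2.le
  linarith

/-- **Corollary 2.**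
Let `(Y_j)` be a real-valued, centered, stationary process.  For every `p ∈ (1,2)`, every
`ε > 0` and every `N ≥ 1`,
`E|Σ_{j=1}^N Y_j|^p ≤ C_p · N · (∫₀¹ (α_Y⁻¹(u))^{(p-1)(1+ε)/ε} du)^{ε/(1+ε)}
  · (E|Y₁|^{(1+ε)p})^{1/(1+ε)}`,
where `C_p = 5^p p(5-2p)/((p-1)(2-p))` (the inequality is stated between extended
nonnegative reals). -/
theorem corollary2
    {Ω : Type*} [MeasurableSpace Ω] (P : Measure Ω) [IsProbabilityMeasure P]
    -- the stationary centered process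
    (Y : ℕ → Ω → ℝ) (hYmeas : ∀ i, Measurable (Y i))
    (hstat : ∀ j : ℕ, Measure.map (fun ω => fun i : ℕ => Y (i + j) ω) P =
      Measure.map (fun ω => fun i : ℕ => Y i ω) P)
    (hYint : Integrable (Y 1) P) (hcent : ∫ ω, Y 1 ω ∂P = 0)
    -- the Rosenblatt mixing coefficients of Y and their inverse function
    (alphaY : ℕ → ℝ) (halpha0 : alphaY 0 = 1 / 2)
    (halpha : ∀ m, 1 ≤ m → alphaY m = ⨆ i : ℕ, sSup {r : ℝ | ∃ A B : Set Ω,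
      MeasurableSet[⨆ kk ∈ Set.Iic i,
        MeasurableSpace.comap (Y kk) inferInstance] A ∧
      MeasurableSet[⨆ jj ∈ Set.Ici (i + m),
        MeasurableSpace.comap (Y jj) inferInstance] B ∧
      r = |(P A).toReal * (P B).toReal - (P (A ∩ B)).toReal|})
    (αinv : ℝ → ℝ≥0∞)
    (hαinv : ∀ u, αinv u = sInf ((fun m : ℕ => (m : ℝ≥0∞)) '' {m | alphaY m ≤ u}))
    -- the exponents and the horizon N
    (p ε : ℝ) (hp1 : 1 < p) (hp2 : p < 2) (hε : 0 < ε) (N : ℕ) (hN : 1 ≤ N) :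
    ∫⁻ ω, (ENNReal.ofReal |∑ j ∈ Finset.Icc 1 N, Y j ω|) ^ p ∂P ≤
      ENNReal.ofReal (5 ^ p * (p * (5 - 2 * p) / ((p - 1) * (2 - p)))) * (N : ℝ≥0∞) *
        (∫⁻ u in Set.Ioc (0 : ℝ) 1, (αinv u) ^ ((p - 1) * (1 + ε) / ε) ∂volume) ^
          (ε / (1 + ε)) *
        (∫⁻ ω, (ENNReal.ofReal |Y 1 ω|) ^ ((1 + ε) * p) ∂P) ^ (1 / (1 + ε)) := by
  have hlaw : ∀ j, P.map (Y j) = P.map (Y 1) := by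
    have h0 : ∀ j, P.map (Y j) = P.map (Y 0) := fun j => by
      have := congrArg (Measure.map fun f : ℕ → ℝ => f 0) (hstat j)
      rw [Measure.map_map (measurable_pi_apply 0)
          (measurable_pi_lambda _ fun i => hYmeas (i + j)),
        Measure.map_map (measurable_pi_apply 0) (measurable_pi_lambda _ hYmeas)] at this
      simpa [Function.comp_def] using this
    exact fun j => (h0 j).trans (h0 1).symm
  have hanti := antitone_mixing_coefficient hYmeas halpha0 halpha
  have hmix := abs_measureReal_mul_sub_inter_le_of_mixing hYmeas halpha
  obtain rfl : αinv = seqInverse alphaY := funext hαinv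
  have hsum : ∀ ω, ∑ j ∈ Finset.Icc 1 N, Y j ω = ∑ j ∈ Finset.range N, Y (j + 1) ω := fun ω => by
    rw [Finset.sum_bij' (fun j _ => j - 1) (fun j _ => j + 1)]
    all_goals intro j hj; simp only [Finset.mem_Icc, Finset.mem_range] at *
    · omega
    · omega
    · omega
    · omega
    · rw [Nat.sub_add_cancel hj.1]
  simp_rw [hsum]
  refine (lintegral_abs_sum_rpow_le hYmeas hlaw hYint hcent hanti halpha0 hmix N hp1 hp2).trans ?_
  rw [mul_assoc (_ * _)]
  refine mul_le_mul' (mul_le_mul_left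
    (ENNReal.ofReal_le_ofReal (twenty_four_div_le hp1 hp2)) _) ?_
  have hQm : Measurable (tailQuantile P fun ω => ‖Y 1 ω‖ₑ) := (antitone_tailQuantile P _).measurable
  have hRm : Measurable (seqInverse alphaY) := antitone_seqInverse.measurable
  have hε1 : 0 < 1 + ε := by linarith
  have hconj : ((1 + ε) / ε).HolderConjugate (1 + ε) := by
    rw [Real.holderConjugate_iff]
    refine ⟨by rw [lt_div_iff₀ hε]; linarith, ?_⟩
    field_simp
    ring
  have hmoment : ∫⁻ ω, ENNReal.ofReal |Y 1 ω| ^ ((1 + ε) * p) ∂P =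
      ∫⁻ u in Ioc (0 : ℝ) 1, (tailQuantile P fun ω => ‖Y 1 ω‖ₑ) u ^ ((1 + ε) * p) := by
    simp_rw [← Real.enorm_eq_ofReal_abs]
    exact lintegral_comp_eq_lintegral_tailQuantile P (hYmeas 1).enorm
      (φ := fun t => t ^ ((1 + ε) * p)) (measurable_id.pow_const _)
  have hholder := ENNReal.lintegral_mul_le_Lp_mul_Lq (volume.restrict (Ioc (0 : ℝ) 1)) hconj
    (hRm.pow_const (p - 1)).aemeasurable (hQm.pow_const p).aemeasurable
  refine hholder.trans (le_of_eq ?_)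
  rw [hmoment]
  simp_rw [← ENNReal.rpow_mul]
  rw [one_div_div, ← mul_div_assoc, mul_comm p]
end
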